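/- Let p and q be finite probability vectors. Suppose that (i) f_α(p) < f_α(q) for all α ∈ (0,1), (ii) H₁(p) < H₁(q), (iii) f_α(p) > f_α(q) for all α ∈ (1,∞), and that in addition either (iv) ‖p‖₀ < ‖q‖₀, or (v) ‖p‖₀ = ‖q‖₀, H'₀(p) < H'₀(q), and f_α(p) > f_α(q) for all α ∈ (−∞,0). Then there exists a finite probability vector r such that p ⊗ r majorizes q ⊗ r. Conversely, if such an r exists, then f_α(p) ≤ f_α(q) for all α ∈ (0,1), H₁(p) ≤ H₁(q), f_α(p) ≥ f_α(q) for all α ∈ (1,∞), ‖p‖₀ ≤ ‖q‖₀, and if ‖p‖₀ = ‖q‖₀ also H'₀(p) ≤ H'₀(q) and f_α(p) ≥ f_α(q) for all α ∈ (−∞,0). -/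

import Mathlib

open scoped BigOperators NNReal

noncomputable section

/-- A probability vector on a finite index type. -/
def IsProbVec {ι : Type*} [Fintype ι] (p : ι → ℝ) : Prop :=
  (∀ i, 0 ≤ p i) ∧ ∑ i, p i = 1

/-- A (column-)stochastic matrix: nonnegative entries, every column sums to `1`. -/
def IsStochastic {ι κ : Type*} [Fintype ι] [Fintype κ] (T : ι → κ → ℝ) : Prop :=
  (∀ i j, 0 ≤ T i j) ∧ ∀ j, ∑ i, T i j = 1

/-- Matrix–vector multiplication. -/
def matVec {ι κ : Type*} [Fintype κ] (T : ι → κ → ℝ) (v : κ → ℝ) : ι → ℝ :=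
  fun i => ∑ j, T i j * v j

/-- Kronecker product of two vectors. -/
def kron {ι κ : Type*} (p : ι → ℝ) (q : κ → ℝ) : ι × κ → ℝ :=
  fun x => p x.1 * q x.2

/-- `n`-fold Kronecker power of a vector. -/
def kpow {ι : Type*} (p : ι → ℝ) (n : ℕ) : (Fin n → ι) → ℝ :=
  fun f => ∏ j, p (f j)

/-- Kronecker product reindexed along `Fin (m * n)`. -/
def kronFin {m n : ℕ} (p : Fin m → ℝ) (q : Fin n → ℝ) : Fin (m * n) → ℝ :=
  fun i => kron p q (finProdFinEquiv.symm i)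

/-- The sum of the `k` largest entries of a nonnegative vector, expressed as the
largest sum over subsets of cardinality at most `k`. -/
def topSum {ι : Type*} [Fintype ι] (p : ι → ℝ) (k : ℕ) : ℝ :=
  ⨆ s ∈ {s : Finset ι | s.card ≤ k}, ∑ i ∈ s, p i

/-- Majorization for nonnegative vectors (possibly of different lengths):
equal total sums, and for each `k` the sum of the `k` largest entries of `p` is
at least that of `q`. -/
def Majorizes {ι κ : Type*} [Fintype ι] [Fintype κ] (p : ι → ℝ) (q : κ → ℝ) : Prop :=
  (∑ i, p i = ∑ j, q j) ∧ ∀ k : ℕ, topSum q k ≤ topSum p k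

/-- The size of the support, `‖p‖₀`. -/
def supp0 {ι : Type*} [Fintype ι] (p : ι → ℝ) : ℕ :=
  (Finset.univ.filter fun i => p i ≠ 0).card

/-- Entrywise nonnegativity. -/
def NonnegVec {n : ℕ} (p : Fin n → ℝ) : Prop := ∀ i, 0 ≤ p i

/-- The modified majorization preorder `≽₀,₁`: majorization plus equality of
support sizes. -/
def MajMod {ι κ : Type*} [Fintype ι] [Fintype κ] (p : ι → ℝ) (q : κ → ℝ) : Prop :=
  Majorizes p q ∧ supp0 p = supp0 q

/-- `f_α(p) = ∑_{i ∈ supp p} (p i)^α`. -/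
def fA {ι : Type*} [Fintype ι] (α : ℝ) (p : ι → ℝ) : ℝ :=
  ∑ i, if p i = 0 then 0 else p i ^ α

/-- Shannon entropy (the terms with `p i = 0` vanish). -/
def H1ent {ι : Type*} [Fintype ι] (p : ι → ℝ) : ℝ := -∑ i, p i * Real.log (p i)

/-- `H₀'(p) = ∑_{i ∈ supp p} log p_i`. -/
def H0' {ι : Type*} [Fintype ι] (p : ι → ℝ) : ℝ :=
  ∑ i, if p i = 0 then 0 else Real.log (p i)

/-- Rényi entropy of order `α` (with `α = 1` the Shannon entropy). -/
def Hent {ι : Type*} [Fintype ι] (α : ℝ) (p : ι → ℝ) : ℝ :=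
  if α = 1 then -∑ i, p i * Real.log (p i)
  else (1 / (1 - α)) * Real.log (∑ i, if p i = 0 then 0 else p i ^ α)

/-- Min-entropy `H_∞(p) = - log max_i p_i`. -/
def HentInf {ι : Type*} [Fintype ι] (p : ι → ℝ) : ℝ := -Real.log (⨆ i, p i)

/-- Kullback–Leibler divergence (the terms with `p i = 0` vanish). -/
def KL {n : ℕ} (p q : Fin n → ℝ) : ℝ :=
  ∑ i, p i * Real.log (p i / q i)

/-- Rényi divergence of order `α` for vectors with common support. -/
def Renyi {n : ℕ} (α : ℝ) (p q : Fin n → ℝ) : ℝ :=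
  if α = 1 then ∑ i, p i * Real.log (p i / q i)
  else (1 / (α - 1)) * Real.log (∑ i, if p i = 0 then 0 else p i ^ α * q i ^ (1 - α))

/-- Max-divergence `D_∞(p‖q) = max_{i ∈ supp q} log (p_i / q_i)`. -/
def RenyiInf {n : ℕ} (p q : Fin n → ℝ) : ℝ :=
  ⨆ i ∈ Finset.univ.filter (fun i => q i ≠ 0), Real.log (p i / q i)

/-- Rényi divergence with values in the extended reals `[0, ∞]`. -/
def RenyiE {n : ℕ} (α : ℝ) (p q : Fin n → ℝ) : EReal :=
  if α = 1 then
    (if ∀ i, p i ≠ 0 → q i ≠ 0 then ((∑ i, p i * Real.log (p i / q i) : ℝ) : EReal) else ⊤)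
  else if α < 1 then
    (if ∃ i, p i ≠ 0 ∧ q i ≠ 0 then
      (((1 / (α - 1)) *
        Real.log (∑ i, if p i = 0 ∨ q i = 0 then 0 else p i ^ α * q i ^ (1 - α)) : ℝ) : EReal)
    else (⊤ : EReal))
  else
    (if ∀ i, p i ≠ 0 → q i ≠ 0 then
      (((1 / (α - 1)) *
        Real.log (∑ i, if p i = 0 then 0 else p i ^ α * q i ^ (1 - α)) : ℝ) : EReal)
    else (⊤ : EReal))

/-- The common support of a tuple of vectors. -/
def suppIdx {d n : ℕ} (P : Fin d → Fin n → ℝ) : Finset (Fin n) :=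
  Finset.univ.filter fun i => ∃ k, P k i ≠ 0

/-- `f_α(P) = ∑_{i ∈ I} ∏_k (p_i^{(k)})^{α_k}` with `I` the common support. -/
def fMat {d n : ℕ} (α : Fin d → ℝ) (P : Fin d → Fin n → ℝ) : ℝ :=
  ∑ i ∈ suppIdx P, ∏ k, P k i ^ α k

/-- The matrix `α`-divergence `D_α`. -/
def Dmat {d n : ℕ} (α : Fin d → ℝ) (P : Fin d → Fin n → ℝ) : ℝ :=
  (1 / ((⨆ k, α k) - 1)) * Real.log (∑ i ∈ suppIdx P, ∏ k, P k i ^ α k)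

/-- The tropical matrix divergence `D^𝕋_β`. -/
def DmatT {d n : ℕ} (β : Fin d → ℝ) (P : Fin d → Fin n → ℝ) : ℝ :=
  (1 / (⨆ k, β k)) * Real.log (⨆ i ∈ suppIdx P, ∏ k, P k i ^ β k)

/-- Membership in `A₊`: entries summing to `1`, all nonnegative. -/
def memAplus {d : ℕ} (α : Fin d → ℝ) : Prop := (∑ k, α k = 1) ∧ ∀ k, 0 ≤ α k

/-- Membership in `A₋`: entries summing to `1`, one entry `≥ 1`, the others `≤ 0`. -/
def memAminus {d : ℕ} (α : Fin d → ℝ) : Prop :=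
  (∑ k, α k = 1) ∧ ∃ k, 1 ≤ α k ∧ ∀ l, l ≠ k → α l ≤ 0

/-- Membership in `B₋`: entries summing to `0`, one entry `≥ 0`, the others `≤ 0`. -/
def memBminus {d : ℕ} (β : Fin d → ℝ) : Prop :=
  (∑ k, β k = 0) ∧ ∃ k, 0 ≤ β k ∧ ∀ l, l ≠ k → β l ≤ 0

/-- `α` is none of the standard basis vectors `e₁, …, e_d`. -/
def notBasis {d : ℕ} (α : Fin d → ℝ) : Prop := ∀ k, α ≠ Pi.single k 1

/-- ℓ¹-distance of two vectors, padding with zeros to a common length. -/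
def l1PadDist {m n : ℕ} (p : Fin m → ℝ) (q : Fin n → ℝ) : ℝ :=
  ∑ i : Fin (max m n),
    |(if h : (i : ℕ) < m then p ⟨(i : ℕ), h⟩ else 0) -
      (if h : (i : ℕ) < n then q ⟨(i : ℕ), h⟩ else 0)|

/-- Index type of the direct sum `⨁_{s=0}^{n-1} p^{⊗(n-1-s)} ⊗ q^{⊗s}`. -/
abbrev TrickIdx (m m' n : ℕ) : Type :=
  Σ s : Fin n, (Fin (n - 1 - (s : ℕ)) → Fin m) × (Fin (s : ℕ) → Fin m')

/-- The standard catalyst `(1/n) ⨁_{s=0}^{n-1} p^{⊗(n-1-s)} ⊗ q^{⊗s}`. -/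
def trick {m m' : ℕ} (p : Fin m → ℝ) (q : Fin m' → ℝ) (n : ℕ) : TrickIdx m m' n → ℝ :=
  fun x => (1 / (n : ℝ)) * (kpow p (n - 1 - (x.1 : ℕ)) x.2.1 * kpow q (x.1 : ℕ) x.2.2)

/-- A valid tuple: nonnegative entries and common support across the tuple. -/
def TupOK {d n : ℕ} (P : Fin d → Fin n → ℝ) : Prop :=
  (∀ k i, 0 ≤ P k i) ∧ ∀ k l i, P k i ≠ 0 ↔ P l i ≠ 0

/-- Matrix majorization of tuples: a single stochastic matrix carrying each column
of `P` to the corresponding column of `Q`. -/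
def TupMaj {d m n : ℕ} (P : Fin d → Fin m → ℝ) (Q : Fin d → Fin n → ℝ) : Prop :=
  ∃ T : Fin n → Fin m → ℝ, IsStochastic T ∧ ∀ k, matVec T (P k) = Q k

/-!
Let `c` be the multiset of logarithms of the nonzero entries of `p` minus that of `q`, and let
`φ y = ∑ c x · (e^(x - y) - 1)⁺`. Comparing truncated sums, `p ⊗ r` majorizes `q ⊗ r` exactly when
`∑ φ (y - log (r l)) ≥ 0` for all `y`, so a catalyst is a finite family of translations which makes
the sum of the translates of `φ` nonnegative. Up to boundary terms the Laplace transform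
`∫ φ y · e^(θy) dy` is the order-`θ` quantity of the theorem: `f_θ` for `θ ≠ 0, 1`, Shannon entropy
at `θ = 1`, and `H₀'` at `θ = 0`.

Integrating the sum of translates against `e^(θy)` gives necessity. For sufficiency, give the
translates on a fine grid the multiplicities of a wide Gaussian, which near any point looks like an
exponential `e^(θz)`. For bounded `θ` the resulting sum is a Riemann sum of a positive Laplace
transform; for large `|θ|` it is dominated by the ends of the support of `φ`, where `φ > 0`. If
`‖p‖₀ < ‖q‖₀`, then `φ` is a positive constant near `-∞` and is first cut off far to the left.
-/

/-! ### Majorization and truncated sums -/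

section Majorization

variable {ι κ : Type*} [Fintype ι] [Fintype κ] {p : ι → ℝ} {q : κ → ℝ}

lemma sum_le_topSum {k : ℕ} {s : Finset ι} (hs : s.card ≤ k) : ∑ i ∈ s, p i ≤ topSum p k := by
  refine le_trans ?_ (le_ciSup (Set.finite_range _).bddAbove s)
  rw [ciSup_pos (show s ∈ {s : Finset ι | s.card ≤ k} from hs)]

lemma topSum_le_mul_add_sum_max {t : ℝ} (ht : 0 ≤ t) (k : ℕ) :
    topSum p k ≤ k * t + ∑ i, max (p i - t) 0 := by
  have hmax : ∀ i, 0 ≤ max (p i - t) 0 := fun i => le_max_right _ _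
  have hbound : 0 ≤ k * t + ∑ i, max (p i - t) 0 :=
    add_nonneg (by positivity) (Finset.sum_nonneg fun i _ => hmax i)
  refine Real.iSup_le (fun s => Real.iSup_le (fun hs => ?_) hbound) hbound
  calc ∑ i ∈ s, p i ≤ ∑ i ∈ s, (t + max (p i - t) 0) :=
        Finset.sum_le_sum fun i _ => by linarith [le_max_left (p i - t) 0]
    _ = s.card * t + ∑ i ∈ s, max (p i - t) 0 := by
        rw [Finset.sum_add_distrib, Finset.sum_const, nsmul_eq_mul]
    _ ≤ k * t + ∑ i, max (p i - t) 0 := by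
        gcongr
        exacts [hs, s.subset_univ]

variable (p) in
lemma exists_card_eq_forall_notMem_le {k : ℕ} (hk : k ≤ Fintype.card ι) :
    ∃ s : Finset ι, s.card = k ∧ ∀ i ∈ s, ∀ j ∉ s, p j ≤ p i := by
  classical
  induction k with
  | zero => exact ⟨∅, rfl, by simp⟩
  | succ k ih =>
    obtain ⟨s, hs, htop⟩ := ih (by omega)
    have hcompl : sᶜ.Nonempty := by
      rw [← Finset.card_pos, Finset.card_compl]
      omega
    obtain ⟨a, ha, hmax⟩ := sᶜ.exists_max_image p hcompl
    rw [Finset.mem_compl] at ha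
    refine ⟨insert a s, by rw [Finset.card_insert_of_notMem ha, hs], fun i hi j hj => ?_⟩
    obtain ⟨-, hjs⟩ := not_or.1 (mt Finset.mem_insert.2 hj)
    obtain rfl | hi := Finset.mem_insert.1 hi
    · exact hmax j (Finset.mem_compl.2 hjs)
    · exact htop i hi j hjs

lemma exists_mul_add_sum_max_le_topSum (hp : ∀ i, 0 ≤ p i) (k : ℕ) :
    ∃ t, 0 ≤ t ∧ k * t + ∑ i, max (p i - t) 0 ≤ topSum p k := by
  classical
  obtain hk | hk := le_total (Fintype.card ι) k
  · exact ⟨0, le_rfl, by simpa [hp] using sum_le_topSum (p := p) (s := Finset.univ) hk⟩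
  obtain ⟨s, rfl, htop⟩ := exists_card_eq_forall_notMem_le p hk
  obtain ⟨t, ht, hle, hge⟩ : ∃ t, 0 ≤ t ∧ (∀ j ∉ s, p j ≤ t) ∧ ∀ i ∈ s, t ≤ p i := by
    obtain hs | hs := sᶜ.eq_empty_or_nonempty
    · rw [Finset.compl_eq_empty_iff] at hs
      exact ⟨0, le_rfl, by simp [hs], fun i _ => hp i⟩
    · obtain ⟨a, ha, hmax⟩ := sᶜ.exists_max_image p hs
      exact ⟨p a, hp a, fun j hj => hmax j (Finset.mem_compl.2 hj),
        fun i hi => htop i hi a (Finset.mem_compl.1 ha)⟩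
  refine ⟨t, ht, le_trans (le_of_eq ?_) (sum_le_topSum le_rfl)⟩
  calc s.card * t + ∑ i, max (p i - t) 0 = s.card * t + ∑ i ∈ s, max (p i - t) 0 := by
        rw [← Finset.sum_subset s.subset_univ fun j _ hj =>
          max_eq_right (sub_nonpos.2 (hle j hj))]
    _ = s.card * t + ∑ i ∈ s, (p i - t) := by
        rw [Finset.sum_congr rfl fun i hi => max_eq_left (sub_nonneg.2 (hge i hi))]
    _ = ∑ i ∈ s, p i := by
        rw [Finset.sum_sub_distrib, Finset.sum_const, nsmul_eq_mul]
        ring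

lemma sum_max_le_of_majorizes (h : Majorizes p q) {t : ℝ} (ht : 0 ≤ t) :
    ∑ j, max (q j - t) 0 ≤ ∑ i, max (p i - t) 0 := by
  classical
  set s := Finset.univ.filter fun j => t < q j
  have hsum : ∑ j, max (q j - t) 0 = ∑ j ∈ s, q j - s.card * t := by
    rw [← nsmul_eq_mul, ← Finset.sum_const, ← Finset.sum_sub_distrib, Finset.sum_filter]
    refine Finset.sum_congr rfl fun j _ => ?_
    split_ifs with hj
    · exact max_eq_left (sub_nonneg.2 hj.le)
    · exact max_eq_right (sub_nonpos.2 (not_lt.1 hj))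
  calc ∑ j, max (q j - t) 0 ≤ topSum q s.card - s.card * t := by
        rw [hsum]
        exact sub_le_sub_right (sum_le_topSum le_rfl) _
    _ ≤ topSum p s.card - s.card * t := sub_le_sub_right (h.2 _) _
    _ ≤ ∑ i, max (p i - t) 0 := sub_le_iff_le_add'.2 (topSum_le_mul_add_sum_max ht _)

lemma majorizes_iff_sum_max (hp : ∀ i, 0 ≤ p i) (hq : ∀ j, 0 ≤ q j) :
    Majorizes p q ↔ ∑ i, p i = ∑ j, q j ∧
      ∀ t, 0 < t → ∑ j, max (q j - t) 0 ≤ ∑ i, max (p i - t) 0 := by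
  refine ⟨fun h => ⟨h.1, fun t ht => sum_max_le_of_majorizes h ht.le⟩, fun ⟨hsum, h⟩ =>
    ⟨hsum, fun k => ?_⟩⟩
  obtain ⟨t, ht, htop⟩ := exists_mul_add_sum_max_le_topSum hp k
  have hle : ∑ j, max (q j - t) 0 ≤ ∑ i, max (p i - t) 0 := by
    obtain rfl | ht := ht.eq_or_lt
    · simp [hp, hq, hsum]
    · exact h t ht
  linarith [topSum_le_mul_add_sum_max (p := q) ht k]

end Majorization

/-! ### Catalysts and translates of the hinge transform -/

section Pairing

variable {ι : Type*} [Fintype ι] {p : ι → ℝ} {c c' : ℝ →₀ ℝ}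

/-- The pairing `⟨c, g⟩` of a finitely supported signed measure `c` on `ℝ`, encoded by its point
masses, with a function `g`. -/
def pairing (c : ℝ →₀ ℝ) (g : ℝ → ℝ) : ℝ := c.sum fun x a => a * g x

lemma pairing_eq_sum (c : ℝ →₀ ℝ) (g : ℝ → ℝ) : pairing c g = ∑ x ∈ c.support, c x * g x := rfl

lemma pairing_sub_left (g : ℝ → ℝ) : pairing (c - c') g = pairing c g - pairing c' g :=
  Finsupp.sum_sub_index fun _ _ _ => sub_mul _ _ _

lemma pairing_const_mul (a : ℝ) (g : ℝ → ℝ) :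
    pairing c (fun x => a * g x) = a * pairing c g := by
  simp only [pairing_eq_sum, Finset.mul_sum, mul_left_comm]

lemma pairing_sub_right (g g' : ℝ → ℝ) :
    pairing c (fun x => g x - g' x) = pairing c g - pairing c g' := by
  simp only [pairing_eq_sum, mul_sub, Finset.sum_sub_distrib]

/-- The logarithms of the nonzero entries of `p`, counted with multiplicity. -/
def logSpectrum (p : ι → ℝ) : ℝ →₀ ℝ := ∑ i with p i ≠ 0, Finsupp.single (Real.log (p i)) 1

lemma pairing_logSpectrum (p : ι → ℝ) (g : ℝ → ℝ) :
    pairing (logSpectrum p) g = ∑ i with p i ≠ 0, g (Real.log (p i)) := by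
  rw [pairing, logSpectrum, ← Finsupp.sum_finsetSum_index (by simp) fun _ _ _ => add_mul _ _ _]
  simp

lemma pairing_logSpectrum_comp_exp (hp : ∀ i, 0 ≤ p i) (g : ℝ → ℝ) :
    pairing (logSpectrum p) (fun x => g (Real.exp x)) = ∑ i with p i ≠ 0, g (p i) := by
  rw [pairing_logSpectrum]
  refine Finset.sum_congr rfl fun i hi => ?_
  rw [Real.exp_log ((hp i).lt_of_ne' (Finset.mem_filter.1 hi).2)]

lemma pairing_logSpectrum_one (p : ι → ℝ) :
    pairing (logSpectrum p) (fun _ => 1) = supp0 p := by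
  simp [pairing_logSpectrum, supp0]

lemma pairing_logSpectrum_id (p : ι → ℝ) : pairing (logSpectrum p) (fun x => x) = H0' p := by
  rw [pairing_logSpectrum, Finset.sum_filter, H0']
  exact Finset.sum_congr rfl fun i _ => ite_not _ _ _

lemma pairing_logSpectrum_exp (hp : ∀ i, 0 ≤ p i) :
    pairing (logSpectrum p) Real.exp = ∑ i, p i := by
  rw [pairing_logSpectrum_comp_exp hp fun t => t, Finset.sum_filter_ne_zero]

lemma pairing_logSpectrum_exp_mul (hp : ∀ i, 0 ≤ p i) (α : ℝ) :
    pairing (logSpectrum p) (fun x => Real.exp (α * x)) = fA α p := by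
  simp_rw [mul_comm α, Real.exp_mul]
  rw [pairing_logSpectrum_comp_exp hp fun t => t ^ α, Finset.sum_filter, fA]
  exact Finset.sum_congr rfl fun i _ => ite_not _ _ _

lemma pairing_logSpectrum_mul_exp (hp : ∀ i, 0 ≤ p i) :
    pairing (logSpectrum p) (fun x => x * Real.exp x) = -H1ent p := by
  have h := pairing_logSpectrum_comp_exp hp fun t => t * Real.log t
  simp_rw [Real.log_exp, mul_comm (Real.exp _)] at h
  rw [h, H1ent, neg_neg, Finset.sum_filter]
  exact Finset.sum_congr rfl fun i _ => by by_cases hi : p i = 0 <;> simp [hi]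

/-- The function `y ↦ ∑ c x · (e^(x - y) - 1)⁺`. For the logarithmic spectrum `c` of a vector `p` it
records the truncated sums `∑ (p i - t)⁺ / t` at `t = e^y`. -/
def hingeTransform (c : ℝ →₀ ℝ) (y : ℝ) : ℝ :=
  pairing c fun x => max (Real.exp (x - y) - 1) 0

lemma hingeTransform_sub (y : ℝ) :
    hingeTransform (c - c') y = hingeTransform c y - hingeTransform c' y :=
  pairing_sub_left _

lemma sum_max_sub_exp (hp : ∀ i, 0 ≤ p i) (y : ℝ) :
    ∑ i, max (p i - Real.exp y) 0 = Real.exp y * hingeTransform (logSpectrum p) y := by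
  have hscale (x : ℝ) : Real.exp y * max (Real.exp (x - y) - 1) 0
      = max (Real.exp x - Real.exp y) 0 := by
    rw [mul_max_of_nonneg _ _ (Real.exp_pos y).le, mul_sub, ← Real.exp_add,
      add_sub_cancel, mul_one, mul_zero]
  rw [hingeTransform, ← pairing_const_mul]
  simp_rw [hscale]
  rw [pairing_logSpectrum_comp_exp hp fun t => max (t - Real.exp y) 0, Finset.sum_filter]
  refine Finset.sum_congr rfl fun i _ => ?_
  by_cases hi : p i = 0 <;> simp [hi, Real.exp_nonneg]

end Pairing

section TranslateSum

/-- Some nonempty finite sum of translates of `φ`, with repetitions allowed, is nonnegative. -/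
def HasNonnegTranslateSum (φ : ℝ → ℝ) : Prop :=
  ∃ (ρ : ℕ) (s : Fin ρ → ℝ), 0 < ρ ∧ ∀ y, 0 ≤ ∑ l, φ (y + s l)

namespace HasNonnegTranslateSum

variable {φ ψ : ℝ → ℝ}

lemma mono (h : HasNonnegTranslateSum φ) (hle : ∀ y, φ y ≤ ψ y) : HasNonnegTranslateSum ψ := by
  obtain ⟨ρ, s, hρ, hs⟩ := h
  exact ⟨ρ, s, hρ, fun y => (hs y).trans (Finset.sum_le_sum fun l _ => hle _)⟩

lemma of_fintype {ι : Type*} [Fintype ι] [Nonempty ι] (s : ι → ℝ)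
    (h : ∀ y, 0 ≤ ∑ l, φ (y + s l)) : HasNonnegTranslateSum φ :=
  ⟨Fintype.card ι, s ∘ (Fintype.equivFin ι).symm, Fintype.card_pos, fun y => (h y).trans_eq
    ((Fintype.equivFin ι).symm.sum_comp fun l => φ (y + s l)).symm⟩

lemma of_weights {ι : Type*} {S : Finset ι} (w : ι → ℕ) (s : ι → ℝ) (hw : ∃ k ∈ S, 0 < w k)
    (h : ∀ y, 0 ≤ ∑ k ∈ S, w k * φ (y + s k)) : HasNonnegTranslateSum φ := by
  obtain ⟨k, hk, hpos⟩ := hw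
  have : Nonempty (Σ k : S, Fin (w k)) := ⟨⟨⟨k, hk⟩, ⟨0, hpos⟩⟩⟩
  refine of_fintype (fun l : Σ k : S, Fin (w k) => s l.1) fun y => (h y).trans_eq ?_
  rw [Fintype.sum_sigma, ← Finset.sum_coe_sort S fun k => w k * φ (y + s k)]
  simp

end HasNonnegTranslateSum

variable {ι κ R : Type*} {p : ι → ℝ} {q : κ → ℝ} {r : R → ℝ}

lemma kron_nonneg (hp : ∀ i, 0 ≤ p i) (hr : ∀ l, 0 ≤ r l) (x : ι × R) : 0 ≤ kron p r x :=
  mul_nonneg (hp _) (hr _)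

variable [Fintype ι] [Fintype κ] [Fintype R]

lemma sum_kron (p : ι → ℝ) (r : R → ℝ) : ∑ x, kron p r x = (∑ i, p i) * ∑ l, r l := by
  rw [Finset.sum_mul_sum, Fintype.sum_prod_type]
  rfl

lemma sum_max_kron_sub_exp (hp : ∀ i, 0 ≤ p i) (hr : ∀ l, 0 ≤ r l) (y : ℝ) :
    ∑ x, max (kron p r x - Real.exp y) 0 =
      Real.exp y * ∑ l with r l ≠ 0, hingeTransform (logSpectrum p) (y - Real.log (r l)) := by
  rw [Fintype.sum_prod_type_right, Finset.mul_sum, Finset.sum_filter]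
  refine Finset.sum_congr rfl fun l _ => ?_
  split_ifs with hl
  · have hpos : 0 < r l := (hr l).lt_of_ne' hl
    have hexp : Real.exp y = r l * Real.exp (y - Real.log (r l)) := by
      rw [Real.exp_sub, Real.exp_log hpos, mul_div_cancel₀ _ hl]
    conv_rhs => rw [hexp]
    rw [mul_assoc, ← sum_max_sub_exp hp, Finset.mul_sum]
    refine Finset.sum_congr rfl fun i _ => ?_
    rw [mul_max_of_nonneg _ _ hpos.le, mul_zero, mul_sub, ← hexp, mul_comm (r l)]
    rfl
  · rw [not_ne_iff] at hl
    simp [kron, hl, Real.exp_nonneg]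

lemma majorizes_kron_iff (hp : ∀ i, 0 ≤ p i) (hq : ∀ j, 0 ≤ q j) (hr : ∀ l, 0 ≤ r l)
    (hpq : ∑ i, p i = ∑ j, q j) :
    Majorizes (kron p r) (kron q r) ↔ ∀ y, 0 ≤ ∑ l with r l ≠ 0,
      hingeTransform (logSpectrum p - logSpectrum q) (y - Real.log (r l)) := by
  rw [majorizes_iff_sum_max (kron_nonneg hp hr) (kron_nonneg hq hr), sum_kron, sum_kron, hpq,
    eq_self, true_and]
  have hexp (y : ℝ) : ∑ x, max (kron q r x - Real.exp y) 0 ≤ ∑ x, max (kron p r x - Real.exp y) 0 ↔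
      0 ≤ ∑ l with r l ≠ 0,
        hingeTransform (logSpectrum p - logSpectrum q) (y - Real.log (r l)) := by
    simp_rw [hingeTransform_sub, Finset.sum_sub_distrib]
    rw [sum_max_kron_sub_exp hp hr, sum_max_kron_sub_exp hq hr,
      mul_le_mul_iff_right₀ (Real.exp_pos y), sub_nonneg]
  refine ⟨fun h y => (hexp y).1 (h _ (Real.exp_pos y)), fun h t ht => ?_⟩
  rw [← Real.exp_log ht]
  exact (hexp _).2 (h _)

lemma exists_catalyst_iff (hp : ∀ i, 0 ≤ p i) (hq : ∀ j, 0 ≤ q j)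
    (hpq : ∑ i, p i = ∑ j, q j) :
    (∃ (ρ : ℕ) (r : Fin ρ → ℝ), IsProbVec r ∧ Majorizes (kron p r) (kron q r)) ↔
      HasNonnegTranslateSum (hingeTransform (logSpectrum p - logSpectrum q)) := by
  constructor
  · rintro ⟨ρ, r, ⟨hr, hsum⟩, hmaj⟩
    rw [majorizes_kron_iff hp hq hr hpq] at hmaj
    obtain ⟨l, -, hl⟩ := Finset.exists_ne_zero_of_sum_ne_zero (hsum.trans_ne one_ne_zero)
    exact .of_weights (S := {l | r l ≠ 0}) (fun _ => 1) (fun l => -Real.log (r l))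
      ⟨l, by simpa using hl, one_pos⟩ fun y => by simpa [← sub_eq_add_neg] using hmaj y
  · rintro ⟨ρ, s, hρ, hs⟩
    have : Nonempty (Fin ρ) := ⟨⟨0, hρ⟩⟩
    set Z := ∑ l, Real.exp (-s l)
    have hZ : 0 < Z := Finset.sum_pos (fun l _ => Real.exp_pos _) Finset.univ_nonempty
    have hr : ∀ l, 0 < Real.exp (-s l) / Z := fun l => by positivity
    refine ⟨ρ, fun l => Real.exp (-s l) / Z, ⟨fun l => (hr l).le, ?_⟩, ?_⟩
    · rw [← Finset.sum_div, div_self hZ.ne']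
    · refine (majorizes_kron_iff hp hq (fun l => (hr l).le) hpq).2 fun y => ?_
      rw [Finset.filter_true_of_mem fun l _ => (hr l).ne']
      convert hs (y + Real.log Z) using 3 with l
      rw [Real.log_div (Real.exp_ne_zero _) hZ.ne', Real.log_exp]
      ring

end TranslateSum

/-! ### Laplace transforms -/

section Laplace

variable {c : ℝ →₀ ℝ} {a b θ : ℝ}

/-- An antiderivative of `t ↦ e^(θt)`. -/
def expPrimitive (θ t : ℝ) : ℝ := if θ = 0 then t else Real.exp (θ * t) / θ

lemma expPrimitive_of_ne_zero (hθ : θ ≠ 0) (t : ℝ) :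
    expPrimitive θ t = Real.exp (θ * t) / θ := if_neg hθ

lemma expPrimitive_zero (t : ℝ) : expPrimitive 0 t = t := if_pos rfl

lemma expPrimitive_nonneg (hθ : 0 < θ) (t : ℝ) : 0 ≤ expPrimitive θ t := by
  rw [expPrimitive_of_ne_zero hθ.ne']
  positivity

lemma hasDerivAt_exp_const_mul (θ t : ℝ) :
    HasDerivAt (fun t => Real.exp (θ * t)) (Real.exp (θ * t) * θ) t := by
  simpa using ((hasDerivAt_id t).const_mul θ).exp

lemma hasDerivAt_expPrimitive (θ t : ℝ) :
    HasDerivAt (expPrimitive θ) (Real.exp (θ * t)) t := by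
  obtain rfl | hθ := eq_or_ne θ 0
  · simpa [funext expPrimitive_zero] using hasDerivAt_id' t
  · rw [funext (expPrimitive_of_ne_zero hθ)]
    simpa [hθ] using (hasDerivAt_exp_const_mul θ t).div_const θ

/-- The kernel whose pairing with `logSpectrum p - logSpectrum q` is the order-`θ` quantity in
Klimesh's conditions: `e^(θx) / (θ(θ - 1))` for generic `θ`, and for `θ = 0, 1` its finite part up
to a combination of `1` and `e^x`. -/
def klimeshKernel (θ x : ℝ) : ℝ := Real.exp x * expPrimitive (θ - 1) x - expPrimitive θ x

lemma klimeshKernel_of_ne (h0 : θ ≠ 0) (h1 : θ ≠ 1) (x : ℝ) :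
    klimeshKernel θ x = (θ * (θ - 1))⁻¹ * Real.exp (θ * x) := by
  have h1' : θ - 1 ≠ 0 := sub_ne_zero.2 h1
  have hexp : Real.exp x * Real.exp ((θ - 1) * x) = Real.exp (θ * x) := by
    rw [← Real.exp_add]
    ring_nf
  rw [klimeshKernel, expPrimitive_of_ne_zero h0, expPrimitive_of_ne_zero h1', ← mul_div_assoc, hexp]
  field_simp
  ring

lemma klimeshKernel_one (x : ℝ) : klimeshKernel 1 x = x * Real.exp x - Real.exp x := by
  simp [klimeshKernel, expPrimitive, mul_comm]

lemma klimeshKernel_zero (x : ℝ) : klimeshKernel 0 x = -1 - x := by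
  simp [klimeshKernel, expPrimitive, ← Real.exp_add, div_neg]

lemma continuous_hingeTransform (c : ℝ →₀ ℝ) : Continuous (hingeTransform c) := by
  unfold hingeTransform pairing Finsupp.sum
  fun_prop

lemma hingeTransform_of_le (hb : ∀ x ∈ c.support, x ≤ b) {y : ℝ} (hy : b ≤ y) :
    hingeTransform c y = 0 := by
  refine Finset.sum_eq_zero fun x hx => ?_
  have hexp : Real.exp (x - y) ≤ 1 := Real.exp_le_one_iff.2 (by linarith [hb x hx])
  simp [max_eq_right (sub_nonpos.2 hexp)]

lemma hingeTransform_of_ge (hexp : pairing c Real.exp = 0) (ha : ∀ x ∈ c.support, a ≤ x) {y : ℝ}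
    (hy : y ≤ a) : hingeTransform c y = -pairing c fun _ => 1 := by
  have hmax : ∀ x ∈ c.support,
      c x * max (Real.exp (x - y) - 1) 0 = Real.exp (-y) * (c x * Real.exp x) - c x * 1 := by
    intro x hx
    have hle : 1 ≤ Real.exp (x - y) := Real.one_le_exp (by linarith [ha x hx])
    rw [max_eq_left (sub_nonneg.2 hle), sub_eq_add_neg x y, Real.exp_add]
    ring
  rw [hingeTransform, pairing_eq_sum, Finset.sum_congr rfl hmax, Finset.sum_sub_distrib,
    ← Finset.mul_sum, ← pairing_eq_sum, ← pairing_eq_sum, hexp, mul_zero, zero_sub]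

lemma integral_hinge_mul_exp {x : ℝ} (hx : x ∈ Set.Icc a b) (θ : ℝ) :
    ∫ y in a..b, max (Real.exp (x - y) - 1) 0 * Real.exp (θ * y) =
      klimeshKernel θ x - (Real.exp x * expPrimitive (θ - 1) a - expPrimitive θ a) := by
  have hcont : Continuous fun y => max (Real.exp (x - y) - 1) 0 * Real.exp (θ * y) := by fun_prop
  have hright : ∫ y in x..b, max (Real.exp (x - y) - 1) 0 * Real.exp (θ * y) = 0 := by
    refine (intervalIntegral.integral_congr fun y hy => ?_).trans intervalIntegral.integral_zero
    rw [Set.uIcc_of_le hx.2] at hy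
    have hle : Real.exp (x - y) ≤ 1 := Real.exp_le_one_iff.2 (sub_nonpos.2 hy.1)
    simp [max_eq_right (sub_nonpos.2 hle)]
  have hleft : ∀ y ∈ Set.uIcc a x, HasDerivAt
      (fun y => Real.exp x * expPrimitive (θ - 1) y - expPrimitive θ y)
      (max (Real.exp (x - y) - 1) 0 * Real.exp (θ * y)) y := by
    intro y hy
    rw [Set.uIcc_of_le hx.1] at hy
    have hle : 1 ≤ Real.exp (x - y) := Real.one_le_exp (sub_nonneg.2 hy.2)
    refine (((hasDerivAt_expPrimitive (θ - 1) y).const_mul (Real.exp x)).sub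
      (hasDerivAt_expPrimitive θ y)).congr_deriv ?_
    have hmul : Real.exp x * Real.exp ((θ - 1) * y) = Real.exp (x - y) * Real.exp (θ * y) := by
      rw [← Real.exp_add, ← Real.exp_add]
      ring_nf
    rw [max_eq_left (sub_nonneg.2 hle), hmul, sub_one_mul]
  rw [← intervalIntegral.integral_add_adjacent_intervals (hcont.intervalIntegrable a x)
    (hcont.intervalIntegrable x b), hright, add_zero,
    intervalIntegral.integral_eq_sub_of_hasDerivAt hleft (hcont.intervalIntegrable a x)]
  rfl

lemma integral_hingeTransform_mul_exp (hexp : pairing c Real.exp = 0)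
    (hc : ∀ x ∈ c.support, x ∈ Set.Icc a b) (θ : ℝ) :
    ∫ y in a..b, hingeTransform c y * Real.exp (θ * y) =
      pairing c (klimeshKernel θ) + pairing c (fun _ => 1) * expPrimitive θ a := by
  have hint (x : ℝ) : IntervalIntegrable
      (fun y => c x * (max (Real.exp (x - y) - 1) 0 * Real.exp (θ * y))) MeasureTheory.volume a b :=
    Continuous.intervalIntegrable (by fun_prop) _ _
  calc ∫ y in a..b, hingeTransform c y * Real.exp (θ * y)
      = ∑ x ∈ c.support, c x * ∫ y in a..b, max (Real.exp (x - y) - 1) 0 * Real.exp (θ * y) := by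
        simp_rw [← intervalIntegral.integral_const_mul]
        rw [← intervalIntegral.integral_finsetSum fun x _ => hint x]
        simp_rw [hingeTransform, pairing_eq_sum, Finset.sum_mul, mul_assoc]
    _ = ∑ x ∈ c.support, (c x * klimeshKernel θ x - c x * Real.exp x * expPrimitive (θ - 1) a
          + c x * 1 * expPrimitive θ a) :=
        Finset.sum_congr rfl fun x hx => by rw [integral_hinge_mul_exp (hc x hx)]; ring
    _ = pairing c (klimeshKernel θ) + pairing c (fun _ => 1) * expPrimitive θ a := by
        rw [Finset.sum_add_distrib, Finset.sum_sub_distrib, ← Finset.sum_mul, ← Finset.sum_mul,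
          ← pairing_eq_sum, ← pairing_eq_sum, ← pairing_eq_sum, hexp, zero_mul, sub_zero]

end Laplace

section KlimeshKernel

variable {ι κ : Type*} [Fintype ι] [Fintype κ] {p : ι → ℝ} {q : κ → ℝ} {θ : ℝ}

lemma pairing_klimeshKernel_of_ne (hp : ∀ i, 0 ≤ p i) (hq : ∀ j, 0 ≤ q j) (h0 : θ ≠ 0)
    (h1 : θ ≠ 1) : pairing (logSpectrum p - logSpectrum q) (klimeshKernel θ) =
      (θ * (θ - 1))⁻¹ * (fA θ p - fA θ q) := by
  rw [funext (klimeshKernel_of_ne h0 h1), pairing_const_mul, pairing_sub_left,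
    pairing_logSpectrum_exp_mul hp, pairing_logSpectrum_exp_mul hq]

lemma pairing_klimeshKernel_one (hp : ∀ i, 0 ≤ p i) (hq : ∀ j, 0 ≤ q j)
    (hpq : ∑ i, p i = ∑ j, q j) : pairing (logSpectrum p - logSpectrum q) (klimeshKernel 1) =
      H1ent q - H1ent p := by
  rw [funext klimeshKernel_one, pairing_sub_left, pairing_sub_right, pairing_sub_right,
    pairing_logSpectrum_mul_exp hp, pairing_logSpectrum_mul_exp hq,
    pairing_logSpectrum_exp hp, pairing_logSpectrum_exp hq, hpq]
  ring

lemma pairing_klimeshKernel_zero (p : ι → ℝ) (q : κ → ℝ) (hpq : supp0 p = supp0 q) :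
    pairing (logSpectrum p - logSpectrum q) (klimeshKernel 0) = H0' q - H0' p := by
  have hneg : klimeshKernel 0 = fun x => (-1) * 1 - x := by
    funext x
    rw [klimeshKernel_zero, mul_one]
  rw [hneg, pairing_sub_left, pairing_sub_right, pairing_sub_right, pairing_const_mul,
    pairing_const_mul, pairing_logSpectrum_one, pairing_logSpectrum_one, hpq,
    pairing_logSpectrum_id, pairing_logSpectrum_id]
  ring

end KlimeshKernel

/-! ### Necessity -/

section Necessity

variable {c : ℝ →₀ ℝ} {θ : ℝ}

lemma exists_support_subset_Icc (c : ℝ →₀ ℝ) : ∃ a b, ∀ x ∈ c.support, x ∈ Set.Icc a b := by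
  obtain ⟨a, ha⟩ := c.support.bddBelow
  obtain ⟨b, hb⟩ := c.support.bddAbove
  exact ⟨a, b, fun x hx => ⟨ha hx, hb hx⟩⟩

lemma integral_comp_add_right_mul_exp (f : ℝ → ℝ) (s t T θ : ℝ) :
    ∫ y in t..T, f (y + s) * Real.exp (θ * y) =
      Real.exp (-(θ * s)) * ∫ y in t + s..T + s, f y * Real.exp (θ * y) := by
  rw [← intervalIntegral.integral_comp_add_right, ← intervalIntegral.integral_const_mul]
  refine intervalIntegral.integral_congr fun y _ => ?_
  have hexp : Real.exp (θ * y) = Real.exp (-(θ * s)) * Real.exp (θ * (y + s)) := by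
    rw [← Real.exp_add]
    ring_nf
  simp only [hexp]
  ring

lemma HasNonnegTranslateSum.pairing_one_nonpos (h : HasNonnegTranslateSum (hingeTransform c))
    (hexp : pairing c Real.exp = 0) : (pairing c fun _ => 1) ≤ 0 := by
  obtain ⟨ρ, s, hρ, hs⟩ := h
  obtain ⟨a, b, hc⟩ := exists_support_subset_Icc c
  obtain ⟨M, hM⟩ := (Set.finite_range s).bddAbove
  have hlow (l : Fin ρ) : hingeTransform c (a - M + s l) = -pairing c fun _ => 1 :=
    hingeTransform_of_ge hexp (fun x hx => (hc x hx).1) (by linarith [hM (Set.mem_range_self l)])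
  have hsum : 0 ≤ (ρ : ℝ) * -pairing c fun _ => 1 := by
    simpa [hlow] using hs (a - M)
  exact neg_nonneg.1 (nonneg_of_mul_nonneg_right hsum (Nat.cast_pos.2 hρ))

lemma HasNonnegTranslateSum.pairing_klimeshKernel_nonneg
    (h : HasNonnegTranslateSum (hingeTransform c)) (hexp : pairing c Real.exp = 0)
    (hθ : ∀ t, pairing c (fun _ => 1) * expPrimitive θ t ≤ 0) :
    0 ≤ pairing c (klimeshKernel θ) := by
  obtain ⟨ρ, s, hρ, hs⟩ := h
  obtain ⟨a, b, hc⟩ := exists_support_subset_Icc c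
  obtain ⟨M, hM⟩ := (Set.finite_range s).bddAbove
  obtain ⟨m, hm⟩ := (Set.finite_range s).bddBelow
  have hcont (l : Fin ρ) : Continuous fun y => hingeTransform c (y + s l) * Real.exp (θ * y) := by
    have := continuous_hingeTransform c
    fun_prop
  have hint (l : Fin ρ) :
      ∫ y in a - M..max (a - M) (b - m), hingeTransform c (y + s l) * Real.exp (θ * y) ≤
        Real.exp (-(θ * s l)) * pairing c (klimeshKernel θ) := by
    rw [integral_comp_add_right_mul_exp, integral_hingeTransform_mul_exp hexp]
    · exact mul_le_mul_of_nonneg_left (by linarith [hθ (a - M + s l)]) (Real.exp_pos _).le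
    · intro x hx
      have hl := Set.mem_range_self (f := s) l
      constructor
      · linarith [(hc x hx).1, hM hl]
      · linarith [(hc x hx).2, hm hl, le_max_right (a - M) (b - m)]
  have hnonneg : 0 ≤ (∑ l, Real.exp (-(θ * s l))) * pairing c (klimeshKernel θ) := by
    calc 0 ≤ ∫ y in a - M..max (a - M) (b - m),
          ∑ l, hingeTransform c (y + s l) * Real.exp (θ * y) :=
          intervalIntegral.integral_nonneg (le_max_left _ _) fun y _ => by
            rw [← Finset.sum_mul]
            exact mul_nonneg (hs y) (Real.exp_pos _).le
      _ ≤ _ := by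
          rw [intervalIntegral.integral_finsetSum fun l _ => (hcont l).intervalIntegrable _ _,
            Finset.sum_mul]
          exact Finset.sum_le_sum fun l _ => hint l
  have : Nonempty (Fin ρ) := ⟨⟨0, hρ⟩⟩
  exact nonneg_of_mul_nonneg_right hnonneg
    (Finset.sum_pos (fun l _ => Real.exp_pos _) Finset.univ_nonempty)

end Necessity

/-! ### Sums over a grid -/

open Filter Topology

section Grid

variable {h y a b : ℝ}

/-- The indices `k` for which the grid point `y + k * h` lies in `[a, b]`. -/
def gridIdx (h y a b : ℝ) : Finset ℤ := Finset.Icc ⌈(a - y) / h⌉ ⌊(b - y) / h⌋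

lemma mem_gridIdx (hh : 0 < h) {k : ℤ} : k ∈ gridIdx h y a b ↔ y + k * h ∈ Set.Icc a b := by
  rw [gridIdx, Finset.mem_Icc, Int.ceil_le, Int.le_floor, div_le_iff₀ hh, le_div_iff₀ hh,
    sub_le_iff_le_add', le_sub_iff_add_le', Set.mem_Icc]

lemma gridIdx_subset {a' b' : ℝ} (hh : 0 < h) (ha : a ≤ a') (hb : b' ≤ b) :
    gridIdx h y a' b' ⊆ gridIdx h y a b := fun _ hk =>
  (mem_gridIdx hh).2 (Set.Icc_subset_Icc ha hb ((mem_gridIdx hh).1 hk))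

lemma card_gridIdx_le (hh : 0 < h) (hab : a ≤ b) :
    ((gridIdx h y a b).card : ℝ) ≤ (b - a) / h + 1 := by
  have hsub : (b - y) / h - (a - y) / h = (b - a) / h := by ring
  have hdiv : 0 ≤ (b - a) / h := div_nonneg (sub_nonneg.2 hab) hh.le
  rw [gridIdx, Int.card_Icc, ← Int.cast_natCast, Int.toNat_eq_max, Int.cast_max]
  push_cast
  exact max_le (by linarith [Int.floor_le ((b - y) / h), Int.le_ceil ((a - y) / h)]) (by linarith)

lemma le_card_gridIdx : (b - a) / h - 1 ≤ ((gridIdx h y a b).card : ℝ) := by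
  have hsub : (b - y) / h - (a - y) / h = (b - a) / h := by ring
  have hcard := Int.self_le_toNat (⌊(b - y) / h⌋ + 1 - ⌈(a - y) / h⌉)
  rw [← Int.card_Icc, ← gridIdx, ← Int.cast_le (R := ℝ)] at hcard
  push_cast at hcard
  linarith [Int.lt_floor_add_one ((b - y) / h), Int.ceil_lt_add_one ((a - y) / h)]

lemma tsum_eq_sum_gridIdx (hh : 0 < h) {f : ℤ → ℝ}
    (hf : ∀ k : ℤ, y + k * h ∉ Set.Icc a b → f k = 0) :
    ∑' k, f k = ∑ k ∈ gridIdx h y a b, f k :=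
  tsum_eq_sum fun k hk => hf k fun hmem => hk ((mem_gridIdx hh).2 hmem)

lemma card_mul_sum_le_card_mul_sum {α β : Type*} {S : Finset α} {T : Finset β} {f : α → ℝ}
    {g : β → ℝ} (hfg : ∀ k ∈ S, ∀ l ∈ T, f k ≤ g l) :
    T.card * ∑ k ∈ S, f k ≤ S.card * ∑ l ∈ T, g l := by
  calc T.card * ∑ k ∈ S, f k = ∑ k ∈ S, ∑ _l ∈ T, f k := by
        simp [Finset.mul_sum]
    _ ≤ ∑ _k ∈ S, ∑ l ∈ T, g l :=
        Finset.sum_le_sum fun k hk => Finset.sum_le_sum fun l hl => hfg k hk l hl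
    _ = S.card * ∑ l ∈ T, g l := by simp

end Grid

section Dominance

variable {φ : ℝ → ℝ} {a b : ℝ}

lemma sum_gridIdx_le_of_growth {h y δ Θ : ℝ} {w : ℤ → ℝ} (hδ : 0 < δ) (hab : a + 3 * δ ≤ b)
    (hh : 0 < h) (hhδ : h ≤ δ / 2) (hΘ : 0 ≤ Θ) (hw : ∀ k, 0 ≤ w k)
    (hgrowth : ∀ k l : ℤ, k ≤ l → y + l * h ≤ b →
      w k * Real.exp (Θ * ((l - k) * h)) ≤ 2 * w l) :
    Θ * δ ^ 2 * ∑ k ∈ gridIdx h y a (b - 3 * δ), w k ≤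
      4 * (b - a) * ∑ l ∈ gridIdx h y (b - 2 * δ) (b - δ), w l := by
  set S := gridIdx h y a (b - 3 * δ)
  set T := gridIdx h y (b - 2 * δ) (b - δ)
  have hpair : ∀ k ∈ S, ∀ l ∈ T, Θ * δ * w k ≤ 2 * w l := by
    intro k hk l hl
    obtain ⟨-, hk⟩ := (mem_gridIdx hh).1 hk
    obtain ⟨hl, hl'⟩ := (mem_gridIdx hh).1 hl
    have hgap : δ ≤ (l - k) * h := by linarith
    have hkl : k ≤ l := by
      have hpos : (0 : ℝ) ≤ l - k := nonneg_of_mul_nonneg_left (hδ.le.trans hgap) hh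
      exact_mod_cast sub_nonneg.1 hpos
    calc Θ * δ * w k ≤ Real.exp (Θ * ((l - k) * h)) * w k := by
          refine mul_le_mul_of_nonneg_right ?_ (hw k)
          linarith [Real.add_one_le_exp (Θ * ((l - k) * h)), mul_le_mul_of_nonneg_left hgap hΘ]
      _ ≤ 2 * w l := by
          rw [mul_comm]
          exact hgrowth k l hkl (by linarith)
  have hcardS : (S.card : ℝ) ≤ (b - a) / h := by
    refine (card_gridIdx_le hh (by linarith)).trans ?_
    rw [div_add_one hh.ne']
    gcongr
    linarith
  have hcardT : δ / (2 * h) ≤ T.card := by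
    refine le_trans ?_ le_card_gridIdx
    rw [div_sub_one hh.ne', div_le_div_iff₀ (by positivity) hh]
    nlinarith
  have hsums : δ / (2 * h) * (Θ * δ * ∑ k ∈ S, w k) ≤ (b - a) / h * (2 * ∑ l ∈ T, w l) := by
    have hnonneg (U : Finset ℤ) : 0 ≤ ∑ k ∈ U, w k := Finset.sum_nonneg fun k _ => hw k
    calc δ / (2 * h) * (Θ * δ * ∑ k ∈ S, w k) ≤ T.card * (Θ * δ * ∑ k ∈ S, w k) :=
          mul_le_mul_of_nonneg_right hcardT (mul_nonneg (by positivity) (hnonneg S))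
      _ ≤ S.card * (2 * ∑ l ∈ T, w l) := by
          simpa only [← Finset.mul_sum] using card_mul_sum_le_card_mul_sum hpair
      _ ≤ (b - a) / h * (2 * ∑ l ∈ T, w l) :=
          mul_le_mul_of_nonneg_right hcardS (mul_nonneg two_pos.le (hnonneg T))
  field_simp at hsums
  linarith

lemma le_tsum_of_forall_le {h y δ m C : ℝ} {w : ℤ → ℝ} (hδ : 0 < δ) (hab : a + 3 * δ ≤ b)
    (hh : 0 < h) (hsupp : Function.support φ ⊆ Set.Icc a b)
    (hnonneg : ∀ z, b - 3 * δ ≤ z → 0 ≤ φ z) (hm : ∀ z ∈ Set.Icc (b - 2 * δ) (b - δ), m ≤ φ z)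
    (hC : ∀ z, -C ≤ φ z) (hw : ∀ k, 0 ≤ w k) :
    m * ∑ k ∈ gridIdx h y (b - 2 * δ) (b - δ), w k - C * ∑ k ∈ gridIdx h y a (b - 3 * δ), w k ≤
      ∑' k : ℤ, w k * φ (y + k * h) := by
  classical
  have hterm : ∀ k : ℤ, (if k ∈ gridIdx h y (b - 2 * δ) (b - δ) then m * w k else 0) -
      (if k ∈ gridIdx h y a (b - 3 * δ) then C * w k else 0) ≤ w k * φ (y + k * h) := by
    intro k
    simp only [mem_gridIdx hh, Set.mem_Icc]
    split_ifs with hT hS hS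
    · linarith
    · rw [sub_zero, mul_comm]
      exact mul_le_mul_of_nonneg_left (hm _ hT) (hw k)
    · rw [zero_sub, ← neg_mul, mul_comm]
      exact mul_le_mul_of_nonneg_left (hC _) (hw k)
    · rw [sub_zero]
      refine mul_nonneg (hw k) ?_
      by_contra hneg
      have hk := hsupp (Function.mem_support.2 (not_le.1 hneg).ne)
      exact hneg (hnonneg _ (not_le.1 fun hle => hS ⟨hk.1, hle⟩).le)
  rw [tsum_eq_sum_gridIdx (a := a) (b := b) hh fun k hk => by
    rw [Function.notMem_support.1 (mt (@hsupp _) hk), mul_zero]]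
  refine le_trans (le_of_eq ?_) (Finset.sum_le_sum fun k _ => hterm k)
  rw [Finset.sum_sub_distrib, Finset.sum_ite_mem, Finset.sum_ite_mem,
    Finset.inter_eq_right.2 (gridIdx_subset hh (by linarith) (by linarith)),
    Finset.inter_eq_right.2 (gridIdx_subset hh le_rfl (by linarith)), Finset.mul_sum,
    Finset.mul_sum]

/-- Weights growing at a large exponential rate concentrate on the right end of `[a, b]`, where `φ`
is positive. -/
lemma tsum_nonneg_of_pos_nhdsLT (hφ : Continuous φ) (hab : a < b)
    (hsupp : Function.support φ ⊆ Set.Ioo a b) (hpos : ∀ᶠ z in 𝓝[<] b, 0 < φ z) :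
    ∃ Θ, 0 < Θ ∧ ∃ h₀, 0 < h₀ ∧ ∀ h, 0 < h → h ≤ h₀ → ∀ (y : ℝ) (w : ℤ → ℝ), (∀ k, 0 ≤ w k) →
      (∀ k l : ℤ, k ≤ l → y + l * h ≤ b → w k * Real.exp (Θ * ((l - k) * h)) ≤ 2 * w l) →
      0 ≤ ∑' k : ℤ, w k * φ (y + k * h) := by
  obtain ⟨l, hl, hlpos⟩ := (mem_nhdsLT_iff_exists_Ioo_subset' hab).1 hpos
  obtain ⟨δ, hδ, haδ, hlδ⟩ : ∃ δ > 0, a + 3 * δ ≤ b ∧ l < b - 3 * δ :=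
    ⟨(b - max a l) / 4, by linarith [max_lt hab hl], by linarith [le_max_left a l],
      by linarith [le_max_right a l, max_lt hab hl]⟩
  have hnonneg : ∀ z, b - 3 * δ ≤ z → 0 ≤ φ z := by
    intro z hz
    by_contra hneg
    have hzb := (hsupp (Function.mem_support.2 (not_le.1 hneg).ne)).2
    exact hneg (hlpos ⟨hlδ.trans_le hz, hzb⟩).le
  obtain ⟨m, hm, hmφ⟩ := (isCompact_Icc (a := b - 2 * δ) (b := b - δ)).exists_forall_le'
    hφ.continuousOn (a := 0) fun z hz => hlpos ⟨by linarith [hz.1], by linarith [hz.2]⟩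
  obtain ⟨C, hC, hCφ⟩ : ∃ C > 0, ∀ z, -C ≤ φ z := by
    obtain ⟨C, hC⟩ := (isCompact_Icc (a := a) (b := b)).exists_bound_of_continuousOn hφ.continuousOn
    refine ⟨max C 1, by positivity, fun z => ?_⟩
    by_cases hz : z ∈ Function.support φ
    · linarith [neg_abs_le (φ z), hC z (Set.Ioo_subset_Icc_self (hsupp hz)), le_max_left C 1,
        Real.norm_eq_abs (φ z)]
    · rw [Function.notMem_support.1 hz]
      linarith [le_max_right C 1]
  have hba : 0 < b - a := sub_pos.2 hab
  obtain ⟨Θ, hΘ, hΘm⟩ : ∃ Θ > 0, Θ * δ ^ 2 * m = 4 * (b - a) * C :=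
    ⟨4 * (b - a) * C / (m * δ ^ 2), by positivity, by field_simp⟩
  refine ⟨Θ, hΘ, δ / 2, by positivity, fun h hh hhδ y w hw hgrowth => ?_⟩
  have hsum := sum_gridIdx_le_of_growth hδ haδ hh hhδ hΘ.le hw hgrowth
  refine le_trans (sub_nonneg.2 ?_) (le_tsum_of_forall_le hδ haδ hh
    (hsupp.trans Set.Ioo_subset_Icc_self) hnonneg hmφ hCφ hw)
  refine le_of_mul_le_mul_left ?_ (mul_pos four_pos hba)
  calc 4 * (b - a) * (C * ∑ k ∈ gridIdx h y a (b - 3 * δ), w k)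
      = m * (Θ * δ ^ 2 * ∑ k ∈ gridIdx h y a (b - 3 * δ), w k) := by
        rw [← mul_assoc, ← hΘm]
        ring
    _ ≤ m * (4 * (b - a) * ∑ l ∈ gridIdx h y (b - 2 * δ) (b - δ), w l) :=
        mul_le_mul_of_nonneg_left hsum hm.le
    _ = 4 * (b - a) * (m * ∑ l ∈ gridIdx h y (b - 2 * δ) (b - δ), w l) := by ring

lemma tsum_nonneg_of_pos_nhdsGT (hφ : Continuous φ) (hab : a < b)
    (hsupp : Function.support φ ⊆ Set.Ioo a b) (hpos : ∀ᶠ z in 𝓝[>] a, 0 < φ z) :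
    ∃ Θ, 0 < Θ ∧ ∃ h₀, 0 < h₀ ∧ ∀ h, 0 < h → h ≤ h₀ → ∀ (y : ℝ) (w : ℤ → ℝ), (∀ k, 0 ≤ w k) →
      (∀ k l : ℤ, l ≤ k → a ≤ y + l * h → w k * Real.exp (Θ * ((k - l) * h)) ≤ 2 * w l) →
      0 ≤ ∑' k : ℤ, w k * φ (y + k * h) := by
  have hneg : Tendsto (fun z : ℝ => -z) (𝓝[<] (-a)) (𝓝[>] a) := by
    simpa using tendsto_neg_nhdsLT (a := -a)
  have hsupp' : Function.support (fun z => φ (-z)) ⊆ Set.Ioo (-b) (-a) := fun z hz => by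
    obtain ⟨hza, hzb⟩ := hsupp hz
    exact ⟨neg_lt.1 hzb, lt_neg.1 hza⟩
  obtain ⟨Θ, hΘ, h₀, hh₀, H⟩ := tsum_nonneg_of_pos_nhdsLT (φ := fun z => φ (-z)) (by fun_prop)
    (neg_lt_neg hab) hsupp' (hneg.eventually hpos)
  refine ⟨Θ, hΘ, h₀, hh₀, fun h hh hhh y w hw hgrowth => ?_⟩
  have hreflect := H h hh hhh (-y) (fun k => w (-k)) (fun k => hw _) fun k l hkl hl => by
    convert hgrowth (-k) (-l) (neg_le_neg hkl) _ using 4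
    · push_cast
      ring
    · push_cast
      linarith
  rw [← (Equiv.neg ℤ).tsum_eq]
  refine hreflect.trans_eq (tsum_congr fun k => ?_)
  simp only [Equiv.neg_apply, Int.cast_neg]
  ring_nf

end Dominance

section Riemann

variable {a b ω : ℝ}

lemma abs_tsum_sub_integral_le {g : ℝ → ℝ} (hg : Continuous g) (hab : a ≤ b)
    (hsupp : Function.support g ⊆ Set.Icc a b)
    (hω : ∀ s t, |s - t| ≤ 1 → |g s - g t| ≤ ω) :
    |∑' k : ℤ, g k - ∫ t, g t| ≤ (b - a + 2) * ω := by
  have hzero : ∀ t, t ∉ Set.Icc a b → g t = 0 := fun t ht =>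
    Function.notMem_support.1 (mt (@hsupp t) ht)
  have hcell : ∀ k : ℤ, k ∉ gridIdx 1 0 (a - 1) b → g k = 0 ∧ ∫ t in (k : ℝ)..k + 1, g t = 0 := by
    intro k hk
    simp only [mem_gridIdx one_pos, zero_add, mul_one, Set.mem_Icc, not_and_or, not_le] at hk
    have hout : ∀ t ∈ Set.uIcc (k : ℝ) (k + 1), g t = 0 := by
      intro t ht
      rw [Set.uIcc_of_le (by linarith)] at ht
      exact hzero t fun hmem => hk.elim (fun h => by linarith [ht.2, hmem.1])
        fun h => by linarith [ht.1, hmem.2]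
    exact ⟨hout k Set.left_mem_uIcc,
      (intervalIntegral.integral_congr hout).trans intervalIntegral.integral_zero⟩
  have hint : ∫ t, g t = ∑ k ∈ gridIdx 1 0 (a - 1) b, ∫ t in (k : ℝ)..k + 1, g t := by
    have hint : MeasureTheory.Integrable g :=
      hg.integrable_of_hasCompactSupport (HasCompactSupport.intro isCompact_Icc hzero)
    have hsum := hint.hasSum_intervalIntegral 0
    simp only [zero_add] at hsum
    exact hsum.unique (hasSum_sum_of_ne_finset_zero fun k hk => (hcell k hk).2)
  have hcell_le (k : ℤ) : |g k - ∫ t in (k : ℝ)..k + 1, g t| ≤ ω := by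
    have hdiff : g k - ∫ t in (k : ℝ)..k + 1, g t = ∫ t in (k : ℝ)..k + 1, (g k - g t) := by
      rw [intervalIntegral.integral_sub (by simp) (hg.intervalIntegrable _ _)]
      simp
    rw [hdiff]
    have hnorm : ∀ t ∈ Set.uIoc (k : ℝ) (k + 1), ‖g k - g t‖ ≤ ω := by
      intro t ht
      rw [Set.uIoc_of_le (by linarith)] at ht
      exact hω k t (abs_sub_le_iff.2 ⟨by linarith [ht.1], by linarith [ht.2]⟩)
    simpa using intervalIntegral.norm_integral_le_of_norm_le_const hnorm
  rw [tsum_eq_sum fun k hk => (hcell k hk).1, hint, ← Finset.sum_sub_distrib]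
  calc |∑ k ∈ gridIdx 1 0 (a - 1) b, (g k - ∫ t in (k : ℝ)..k + 1, g t)|
      ≤ (gridIdx 1 0 (a - 1) b).card • ω :=
        (Finset.abs_sum_le_sum_abs _ _).trans (Finset.sum_le_card_nsmul _ _ _ fun k _ => hcell_le k)
    _ ≤ (b - a + 2) * ω := by
        rw [nsmul_eq_mul]
        refine mul_le_mul_of_nonneg_right ?_ ((abs_nonneg _).trans (hcell_le 0))
        linarith [card_gridIdx_le (y := 0) one_pos (show a - 1 ≤ b by linarith)]

lemma abs_mul_tsum_sub_integral_le {f : ℝ → ℝ} {h : ℝ} (hf : Continuous f) (hab : a ≤ b)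
    (hh : 0 < h) (hsupp : Function.support f ⊆ Set.Icc a b)
    (hω : ∀ s t, |s - t| ≤ h → |f s - f t| ≤ ω) (y : ℝ) :
    |h * ∑' k : ℤ, f (y + k * h) - ∫ z, f z| ≤ (b - a + 2 * h) * ω := by
  have hunit : |∑' k : ℤ, f (y + k * h) - ∫ t, f (y + t * h)| ≤
      ((b - y) / h - (a - y) / h + 2) * ω := by
    refine abs_tsum_sub_integral_le (g := fun t => f (y + t * h)) (by fun_prop)
      (div_le_div_of_nonneg_right (by linarith) hh.le) (fun t ht => ?_) fun s t hst => hω _ _ ?_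
    · obtain ⟨hta, htb⟩ := hsupp ht
      exact ⟨(div_le_iff₀ hh).2 (by linarith), (le_div_iff₀ hh).2 (by linarith)⟩
    · rw [add_sub_add_left_eq_sub, ← sub_mul, abs_mul, abs_of_pos hh]
      exact mul_le_of_le_one_left hh.le hst
  have hsubst : ∫ t, f (y + t * h) = h⁻¹ * ∫ z, f z := by
    rw [MeasureTheory.Measure.integral_comp_mul_right fun t => f (y + t),
      MeasureTheory.integral_add_left_eq_self, abs_of_pos (inv_pos.2 hh), smul_eq_mul]
  rw [hsubst] at hunit
  calc |h * ∑' k : ℤ, f (y + k * h) - ∫ z, f z|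
      = h * |∑' k : ℤ, f (y + k * h) - h⁻¹ * ∫ z, f z| := by
        rw [← abs_of_pos hh, ← abs_mul, abs_of_pos hh, mul_sub, mul_inv_cancel_left₀ hh.ne']
    _ ≤ h * (((b - y) / h - (a - y) / h + 2) * ω) := mul_le_mul_of_nonneg_left hunit hh.le
    _ = (b - a + 2 * h) * ω := by
        field_simp
        ring

lemma tsum_nonneg_of_integral_pos {T : Type*} [PseudoMetricSpace T] [CompactSpace T]
    {F : T → ℝ → ℝ} (hF : Continuous (Function.uncurry F)) (hab : a < b)
    (hsupp : ∀ θ, Function.support (F θ) ⊆ Set.Ioo a b) (hpos : ∀ θ, 0 < ∫ z in a..b, F θ z) :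
    ∃ h₀, 0 < h₀ ∧ ∀ h, 0 < h → h ≤ h₀ → ∀ θ y, 0 ≤ ∑' k : ℤ, F θ (y + k * h) := by
  obtain ⟨m, hm, hmF⟩ := isCompact_univ.exists_forall_le' (a := 0)
    (intervalIntegral.continuous_parametric_intervalIntegral_of_continuous' hF a b).continuousOn
    fun θ _ => hpos θ
  have hcompact : HasCompactSupport (Function.uncurry F) := by
    refine HasCompactSupport.intro (isCompact_univ.prod (isCompact_Icc (a := a) (b := b)))
      fun ⟨θ, z⟩ hz => Function.notMem_support.1 fun hzF => hz ?_
    exact ⟨Set.mem_univ θ, Set.Ioo_subset_Icc_self (hsupp θ hzF)⟩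
  set ω := m / (b - a + 2)
  have hω : 0 < ω := div_pos hm (by linarith)
  obtain ⟨δ, hδ, hδF⟩ := Metric.uniformContinuous_iff.1
    (hcompact.uniformContinuous_of_continuous hF) ω hω
  refine ⟨min 1 (δ / 2), by positivity, fun h hh hle θ y => ?_⟩
  obtain ⟨hh1, hhδ⟩ := le_min_iff.1 hle
  have hmod : ∀ s t, |s - t| ≤ h → |F θ s - F θ t| ≤ ω := by
    intro s t hst
    refine (hδF (a := (θ, s)) (b := (θ, t)) ?_).le
    rw [Prod.dist_eq, dist_self, max_eq_right dist_nonneg, Real.dist_eq]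
    linarith
  have hriemann := abs_mul_tsum_sub_integral_le (hF.uncurry_left θ) hab.le hh
    ((hsupp θ).trans Set.Ioo_subset_Icc_self) hmod y
  rw [← intervalIntegral.integral_eq_integral_of_support_subset
    ((hsupp θ).trans Set.Ioo_subset_Ioc_self)] at hriemann
  refine nonneg_of_mul_nonneg_right ?_ hh
  have hω_le : (b - a + 2 * h) * ω ≤ m :=
    calc (b - a + 2 * h) * ω ≤ (b - a + 2) * ω := by gcongr; linarith
      _ = m := mul_div_cancel₀ _ (by linarith)
  linarith [hmF θ (Set.mem_univ θ), (abs_sub_le_iff.1 hriemann).2]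

end Riemann

/-! ### Gaussian weights -/

section Gaussian

variable {M ε η s t y z : ℝ}

/-- The Gaussian `M e^(-ε s²)` rounded down to an integer, used as the multiplicity of a translation
by `s`. -/
def gaussianWeight (M ε s : ℝ) : ℕ := ⌊M * Real.exp (-(ε * s ^ 2))⌋₊

lemma gaussianWeight_neg (M ε s : ℝ) : gaussianWeight M ε (-s) = gaussianWeight M ε s := by
  rw [gaussianWeight, neg_sq, gaussianWeight]

lemma gaussianWeight_zero_pos (hM : 1 ≤ M) (ε : ℝ) : 0 < gaussianWeight M ε 0 :=
  Nat.floor_pos.2 (by simpa using hM)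

lemma finite_support_gaussianWeight {h : ℝ} (M : ℝ) (hε : 0 < ε) (hh : 0 < h) :
    (Function.support fun k : ℤ => gaussianWeight M ε (k * h)).Finite := by
  refine (gridIdx h 0 (-(1 + M / ε)) (1 + M / ε)).finite_toSet.subset fun k hk => ?_
  have hone : 1 ≤ M * Real.exp (-(ε * (k * h) ^ 2)) := Nat.floor_pos.1 (Nat.pos_of_ne_zero hk)
  rw [Real.exp_neg, ← div_eq_mul_inv, one_le_div (Real.exp_pos _)] at hone
  have hsq : (k * h) ^ 2 ≤ M / ε := by
    rw [le_div_iff₀ hε]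
    linarith [Real.add_one_le_exp (ε * (k * h) ^ 2)]
  rw [Finset.mem_coe, mem_gridIdx hh, zero_add, Set.mem_Icc, ← abs_le, ← Real.sqrt_sq_eq_abs]
  exact Real.sqrt_le_iff.2 ⟨by nlinarith, by nlinarith⟩

lemma floor_mul_le_two_mul_floor {x E : ℝ} (hx : 0 ≤ x) (hE : 1 ≤ E) (hxz : x * E ≤ z) :
    (⌊x⌋₊ : ℝ) * E ≤ 2 * ⌊z⌋₊ := by
  rcases Nat.eq_zero_or_pos ⌊x⌋₊ with h0 | hpos
  · rw [h0, Nat.cast_zero, zero_mul]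
    positivity
  · have hx1 : 1 ≤ x := Nat.floor_pos.1 hpos
    have hz1 : (1 : ℝ) ≤ ⌊z⌋₊ := Nat.one_le_cast.2 (Nat.floor_pos.2 (by nlinarith))
    have hfloor : (⌊x⌋₊ : ℝ) * E ≤ z :=
      (mul_le_mul_of_nonneg_right (Nat.floor_le hx) (by linarith)).trans hxz
    linarith [Nat.lt_floor_add_one z]

lemma gaussianWeight_mul_exp_le {Θ : ℝ} (hM : 0 ≤ M) (hε : 0 ≤ ε) (hΘ : 0 ≤ Θ) (hst : s ≤ t)
    (ht : 2 * ε * t ≤ -Θ) :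
    gaussianWeight M ε s * Real.exp (Θ * (t - s)) ≤ 2 * gaussianWeight M ε t := by
  have hts : 0 ≤ t - s := sub_nonneg.2 hst
  refine floor_mul_le_two_mul_floor (mul_nonneg hM (Real.exp_pos _).le)
    (Real.one_le_exp (mul_nonneg hΘ hts)) ?_
  rw [mul_assoc, ← Real.exp_add]
  refine mul_le_mul_of_nonneg_left (Real.exp_le_exp.2 ?_) hM
  nlinarith [mul_nonneg hts (sub_nonneg.2 ht), mul_nonneg hε (sq_nonneg (t - s))]

/-- Seen from `y`, the Gaussian is the exponential `e^(2εyz)` up to a constant and the slowly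
varying factor `e^(-εz²)`. -/
lemma gaussianWeight_mem_Icc (hε : 0 ≤ ε) (hη : 0 < η) (hη1 : η ≤ 1) (hz : ε * z ^ 2 ≤ η / 2)
    (hM : 2 / η ≤ M * Real.exp (-(ε * (z - y) ^ 2))) :
    (gaussianWeight M ε (z - y) : ℝ) ∈
      Set.Icc ((1 - η) * (M * Real.exp (-(ε * y ^ 2)) * Real.exp (2 * ε * y * z)))
        (M * Real.exp (-(ε * y ^ 2)) * Real.exp (2 * ε * y * z)) := by
  set X := M * Real.exp (-(ε * (z - y) ^ 2)) with hX
  set E := M * Real.exp (-(ε * y ^ 2)) * Real.exp (2 * ε * y * z) with hE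
  have hX0 : 0 < X := (div_pos two_pos hη).trans_le hM
  have hXE : X = E * Real.exp (-(ε * z ^ 2)) := by
    rw [hX, hE, mul_assoc, mul_assoc, ← Real.exp_add, ← Real.exp_add]
    ring_nf
  have hE0 : 0 < E := pos_of_mul_pos_left (hXE ▸ hX0) (Real.exp_pos _).le
  have hfloor : X * (1 - η / 2) ≤ ⌊X⌋₊ := by
    rw [div_le_iff₀ hη] at hM
    linarith [Nat.lt_floor_add_one X]
  have hEX : E * (1 - η / 2) ≤ X := by
    rw [hXE]
    exact mul_le_mul_of_nonneg_left (by linarith [Real.add_one_le_exp (-(ε * z ^ 2))]) hE0.le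
  refine ⟨?_, (Nat.floor_le hX0.le).trans ?_⟩
  · calc (1 - η) * E ≤ E * (1 - η / 2) * (1 - η / 2) := by
          nlinarith [mul_nonneg hE0.le (sq_nonneg η)]
      _ ≤ X * (1 - η / 2) := mul_le_mul_of_nonneg_right hEX (by linarith)
      _ ≤ ⌊X⌋₊ := hfloor
  · rw [hXE]
    exact mul_le_of_le_one_right hE0.le
      (Real.exp_le_one_iff.2 (neg_nonpos.2 (mul_nonneg hε (sq_nonneg z))))

lemma exists_gaussian_scale {B C : ℝ} (hη : 0 < η) (hη1 : η ≤ 1) :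
    ∃ ε M : ℝ, 0 < ε ∧ ε ≤ 1 ∧ 1 ≤ M ∧ ∀ z, |z| ≤ B → ε * z ^ 2 ≤ η / 2 ∧
      ∀ y, |2 * ε * y| ≤ C → 2 / η ≤ M * Real.exp (-(ε * (z - y) ^ 2)) := by
  obtain ⟨ε, hε, hε1, hεB⟩ : ∃ ε > 0, ε ≤ 1 ∧ ε * B ^ 2 ≤ η / 2 :=
    ⟨η / (2 * (B ^ 2 + 1)), by positivity, (div_le_one (by positivity)).2 (by nlinarith), by
      rw [div_mul_eq_mul_div, div_le_div_iff₀ (by positivity) two_pos]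
      nlinarith⟩
  refine ⟨ε, 2 / η * Real.exp (ε * (B + C / (2 * ε)) ^ 2), hε, hε1,
    one_le_mul_of_one_le_of_one_le ((one_le_div hη).2 (by linarith))
      (Real.one_le_exp (by positivity)), fun z hz => ⟨?_, fun y hy => ?_⟩⟩
  · exact (mul_le_mul_of_nonneg_left (sq_le_sq' (abs_le.1 hz).1 (abs_le.1 hz).2) hε.le).trans hεB
  · have hyC : |y| ≤ C / (2 * ε) := by
      rwa [le_div_iff₀ (by positivity), ← abs_of_pos (show 0 < 2 * ε by positivity), ← abs_mul,
        mul_comm]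
    have hzy : |z - y| ≤ B + C / (2 * ε) := (abs_sub z y).trans (add_le_add hz hyC)
    rw [mul_assoc, ← Real.exp_add]
    refine le_mul_of_one_le_right (by positivity) (Real.one_le_exp ?_)
    nlinarith [sq_le_sq' (abs_le.1 hzy).1 (abs_le.1 hzy).2]

end Gaussian

section LaplacePos

variable {φ : ℝ → ℝ} {a b : ℝ}

lemma continuous_integral_mul_exp (hφ : Continuous φ) (a b : ℝ) :
    Continuous fun θ => ∫ z in a..b, φ z * Real.exp (θ * z) :=
  intervalIntegral.continuous_parametric_intervalIntegral_of_continuous' (by fun_prop) a b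

lemma exists_integral_sub_mul_max_pos (hφ : Continuous φ) {K : Set ℝ} (hK : IsCompact K)
    (hpos : ∀ θ ∈ K, 0 < ∫ z in a..b, φ z * Real.exp (θ * z)) :
    ∃ η, 0 < η ∧ η ≤ 1 ∧
      ∀ θ ∈ K, 0 < ∫ z in a..b, (φ z - η * max (φ z) 0) * Real.exp (θ * z) := by
  have hmax : Continuous fun z => max (φ z) 0 := by fun_prop
  obtain ⟨m, hm, hmφ⟩ :=
    hK.exists_forall_le' (continuous_integral_mul_exp hφ a b).continuousOn hpos
  obtain ⟨C, hC⟩ :=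
    hK.exists_bound_of_continuousOn (continuous_integral_mul_exp hmax a b).continuousOn
  have hη : 0 < min 1 (m / (|C| + 1)) := by positivity
  refine ⟨min 1 (m / (|C| + 1)), hη, min_le_left _ _, fun θ hθ => ?_⟩
  set η := min 1 (m / (|C| + 1))
  have hsplit : ∫ z in a..b, (φ z - η * max (φ z) 0) * Real.exp (θ * z) =
      (∫ z in a..b, φ z * Real.exp (θ * z)) - η * ∫ z in a..b, max (φ z) 0 * Real.exp (θ * z) := by
    rw [← intervalIntegral.integral_const_mul, ← intervalIntegral.integral_sub
      (Continuous.intervalIntegrable (by fun_prop) _ _)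
      (Continuous.intervalIntegrable (by fun_prop) _ _)]
    simp_rw [sub_mul, mul_assoc]
  rw [hsplit, sub_pos]
  calc η * ∫ z in a..b, max (φ z) 0 * Real.exp (θ * z)
      ≤ η * |C| := mul_le_mul_of_nonneg_left
        ((le_abs_self _).trans ((hC θ hθ).trans (le_abs_self C))) hη.le
    _ < η * (|C| + 1) := by linarith
    _ ≤ m := (le_div_iff₀ (by positivity)).1 (min_le_right _ _)
    _ ≤ _ := hmφ θ hθ

lemma mul_tsum_le_tsum_gaussianWeight {M ε η h y : ℝ} (hh : 0 < h) (hε : 0 ≤ ε) (hη : 0 < η)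
    (hη1 : η ≤ 1) (hsupp : Function.support φ ⊆ Set.Icc a b)
    (hz : ∀ z ∈ Set.Icc a b, ε * z ^ 2 ≤ η / 2)
    (hM : ∀ z ∈ Set.Icc a b, 2 / η ≤ M * Real.exp (-(ε * (z - y) ^ 2))) :
    M * Real.exp (-(ε * y ^ 2)) * ∑' k : ℤ, (φ (y + k * h) - η * max (φ (y + k * h)) 0) *
        Real.exp (2 * ε * y * (y + k * h)) ≤
      ∑' k : ℤ, gaussianWeight M ε (k * h) * φ (y + k * h) := by
  have hzero : ∀ k : ℤ, y + k * h ∉ Set.Icc a b → φ (y + k * h) = 0 := fun k hk =>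
    Function.notMem_support.1 (mt (@hsupp _) hk)
  rw [tsum_eq_sum_gridIdx (y := y) (a := a) (b := b) hh fun k hk => by simp [hzero k hk],
    tsum_eq_sum_gridIdx (y := y) (a := a) (b := b) hh fun k hk => by simp [hzero k hk],
    Finset.mul_sum]
  refine Finset.sum_le_sum fun k hk => ?_
  rw [mem_gridIdx hh] at hk
  obtain ⟨hlow, hupp⟩ := gaussianWeight_mem_Icc hε hη hη1 (hz _ hk) (hM _ hk)
  rw [add_sub_cancel_left] at hlow hupp
  rcases le_total 0 (φ (y + k * h)) with hφ | hφ
  · rw [max_eq_left hφ]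
    linarith [mul_le_mul_of_nonneg_right hlow hφ]
  · rw [max_eq_right hφ]
    linarith [mul_le_mul_of_nonpos_right hupp hφ]

lemma hasNonnegTranslateSum_of_tsum_gaussianWeight {M ε h : ℝ} (hM : 1 ≤ M) (hε : 0 < ε)
    (hh : 0 < h) (hsum : ∀ y, 0 ≤ ∑' k : ℤ, gaussianWeight M ε (k * h) * φ (y + k * h)) :
    HasNonnegTranslateSum φ := by
  have hfin := finite_support_gaussianWeight M hε hh
  have hpos : 0 < gaussianWeight M ε ((0 : ℤ) * h) := by
    simpa using gaussianWeight_zero_pos hM ε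
  refine .of_weights (S := hfin.toFinset) (fun k => gaussianWeight M ε (k * h)) (fun k => k * h)
    ⟨0, hfin.mem_toFinset.2 hpos.ne', hpos⟩ fun y => (hsum y).trans_eq ?_
  exact tsum_eq_sum fun k hk => by
    rw [Function.notMem_support.1 (mt hfin.mem_toFinset.2 hk), Nat.cast_zero, zero_mul]

/-- Spread the translates over a fine grid with Gaussian multiplicities. If `y` is far to the right
or to the left of `[a, b]`, the weights seen there vary fast and favour the end where `φ` is
positive; otherwise they are close to an exponential with bounded rate, and the sum is close to a
multiple of the Laplace transform. -/
theorem hasNonnegTranslateSum_of_integral_pos (hφ : Continuous φ) (hab : a < b)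
    (hsupp : Function.support φ ⊆ Set.Ioo a b) (hleft : ∀ᶠ z in 𝓝[>] a, 0 < φ z)
    (hright : ∀ᶠ z in 𝓝[<] b, 0 < φ z) (hpos : ∀ θ, 0 < ∫ z in a..b, φ z * Real.exp (θ * z)) :
    HasNonnegTranslateSum φ := by
  obtain ⟨Θ₁, hΘ₁, h₁, hh₁, H₁⟩ := tsum_nonneg_of_pos_nhdsLT hφ hab hsupp hright
  obtain ⟨Θ₂, hΘ₂, h₂, hh₂, H₂⟩ := tsum_nonneg_of_pos_nhdsGT hφ hab hsupp hleft
  obtain ⟨B, hB0, hB⟩ := (isCompact_Icc (a := a) (b := b)).isBounded.exists_pos_norm_le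
  obtain ⟨haB, -⟩ := abs_le.1 (hB a (Set.left_mem_Icc.2 hab.le))
  obtain ⟨-, hbB⟩ := abs_le.1 (hB b (Set.right_mem_Icc.2 hab.le))
  set K := Set.Icc (-(Θ₁ + Θ₂ + 2 * B)) (Θ₁ + Θ₂ + 2 * B)
  obtain ⟨η, hη, hη1, hηφ⟩ :=
    exists_integral_sub_mul_max_pos hφ (isCompact_Icc : IsCompact K) fun θ _ => hpos θ
  obtain ⟨h₃, hh₃, H₃⟩ := tsum_nonneg_of_integral_pos (T := K)
    (F := fun θ z => (φ z - η * max (φ z) 0) * Real.exp (θ * z)) (by fun_prop) hab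
    (fun θ z hz => hsupp fun hφz => hz (by simp [hφz])) fun θ => hηφ θ θ.2
  obtain ⟨h, hh, hle₁, hle₂, hle₃⟩ : ∃ h > 0, h ≤ h₁ ∧ h ≤ h₂ ∧ h ≤ h₃ :=
    ⟨min h₁ (min h₂ h₃), by positivity, by simp, by simp, by simp⟩
  obtain ⟨ε, M, hε, hε1, hM, hscale⟩ :=
    exists_gaussian_scale (B := B) (C := Θ₁ + Θ₂ + 2 * B) hη hη1
  refine hasNonnegTranslateSum_of_tsum_gaussianWeight hM hε hh fun y => ?_
  by_cases hright_far : 2 * ε * (b - y) ≤ -Θ₁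
  · refine H₁ h hh hle₁ y _ (fun k => Nat.cast_nonneg _) fun k l hkl hl => ?_
    rw [sub_mul]
    exact gaussianWeight_mul_exp_le (by linarith) hε.le hΘ₁.le (by gcongr)
      ((mul_le_mul_of_nonneg_left (by linarith) (by positivity)).trans hright_far)
  by_cases hleft_far : 2 * ε * (y - a) ≤ -Θ₂
  · refine H₂ h hh hle₂ y _ (fun k => Nat.cast_nonneg _) fun k l hlk hl => ?_
    rw [← gaussianWeight_neg M ε (k * h), ← gaussianWeight_neg M ε (l * h), sub_mul,
      ← neg_sub_neg]
    exact gaussianWeight_mul_exp_le (by linarith) hε.le hΘ₂.le (neg_le_neg (by gcongr))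
      ((mul_le_mul_of_nonneg_left (by linarith) (by positivity)).trans hleft_far)
  have hy : |2 * ε * y| ≤ Θ₁ + Θ₂ + 2 * B := abs_le.2 ⟨by nlinarith, by nlinarith⟩
  exact (mul_nonneg (by positivity) (H₃ h hh hle₃ ⟨_, abs_le.1 hy⟩ y)).trans
    (mul_tsum_le_tsum_gaussianWeight hh hε.le hη hη1 (hsupp.trans Set.Ioo_subset_Icc_self)
      (fun z hz => (hscale z (hB z hz)).1) fun z hz => (hscale z (hB z hz)).2 y hy)

end LaplacePos
/-! ### Functions constant near `-∞` -/

section Tail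

variable {φ : ℝ → ℝ} {a b d s θ E : ℝ}

lemma neg_exp_mul_integral_abs_le (hφ : Continuous φ) (hab : a ≤ b)
    (hE : ∀ z ∈ Set.Icc a b, θ * z ≤ E) :
    -(Real.exp E * ∫ z in a..b, |φ z|) ≤ ∫ z in a..b, φ z * Real.exp (θ * z) := by
  rw [← intervalIntegral.integral_const_mul, ← intervalIntegral.integral_neg]
  refine intervalIntegral.integral_mono_on hab (Continuous.intervalIntegrable (by fun_prop) _ _)
    (Continuous.intervalIntegrable (by fun_prop) _ _) fun z hz => ?_
  have hexp := Real.exp_le_exp.2 (hE z hz)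
  nlinarith [neg_abs_le (φ z), abs_nonneg (φ z), Real.exp_pos (θ * z)]

lemma exp_mul_integral_le (hφ : Continuous φ) (hab : a ≤ b) (hE : ∀ z ∈ Set.Icc a b, E ≤ θ * z)
    (hnonneg : ∀ z ∈ Set.Icc a b, 0 ≤ φ z) :
    Real.exp E * ∫ z in a..b, φ z ≤ ∫ z in a..b, φ z * Real.exp (θ * z) := by
  rw [← intervalIntegral.integral_const_mul]
  refine intervalIntegral.integral_mono_on hab (Continuous.intervalIntegrable (by fun_prop) _ _)
    (Continuous.intervalIntegrable (by fun_prop) _ _) fun z hz => ?_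
  rw [mul_comm]
  exact mul_le_mul_of_nonneg_left (Real.exp_le_exp.2 (hE z hz)) (hnonneg z hz)

lemma integral_mul_exp_add (hφ : Continuous φ) (u a b θ : ℝ) :
    (∫ z in a..u, φ z * Real.exp (θ * z)) + ∫ z in u..b, φ z * Real.exp (θ * z) =
      ∫ z in a..b, φ z * Real.exp (θ * z) :=
  intervalIntegral.integral_add_adjacent_intervals
    (Continuous.intervalIntegrable (by fun_prop) _ _)
    (Continuous.intervalIntegrable (by fun_prop) _ _)

lemma eventually_integral_mul_exp_pos (hφ : Continuous φ) (hab : a < b)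
    (hpos : ∀ᶠ z in 𝓝[<] b, 0 < φ z) :
    ∀ᶠ θ in atTop, 0 < ∫ z in a..b, φ z * Real.exp (θ * z) := by
  obtain ⟨l, hl, hlpos⟩ := (mem_nhdsLT_iff_exists_Ioo_subset' hab).1 hpos
  obtain ⟨u, hlu, hub⟩ := exists_between (max_lt hab hl)
  obtain ⟨v, huv, hvb⟩ := exists_between hub
  obtain ⟨hau, hlu⟩ := max_lt_iff.1 hlu
  have hb : 0 ≤ φ b := ge_of_tendsto (hφ.tendsto b |>.mono_left nhdsWithin_le_nhds)
    (hpos.mono fun z hz => hz.le)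
  have hnonneg : ∀ z ∈ Set.Icc u b, 0 ≤ φ z := by
    rintro z ⟨huz, hzb⟩
    rcases hzb.eq_or_lt with rfl | hzb
    · exact hb
    · exact (hlpos ⟨hlu.trans_le huz, hzb⟩).le
  have hint : 0 < ∫ z in v..b, φ z :=
    intervalIntegral.intervalIntegral_pos_of_pos_on (hφ.intervalIntegrable _ _)
      (fun z hz => hlpos ⟨hlu.trans (huv.trans hz.1), hz.2⟩) hvb
  have hlarge : Tendsto (fun θ => Real.exp (θ * (v - u)) * ∫ z in v..b, φ z) atTop atTop :=
    (Real.tendsto_exp_atTop.comp (tendsto_id.atTop_mul_const (sub_pos.2 huv))).atTop_mul_const hint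
  filter_upwards [hlarge.eventually_gt_atTop (∫ z in a..u, |φ z|), eventually_ge_atTop 0]
    with θ hθ hθ0
  have hleft := neg_exp_mul_integral_abs_le (E := θ * u) hφ hau.le fun z hz =>
    mul_le_mul_of_nonneg_left hz.2 hθ0
  have hmid := exp_mul_integral_le (E := θ * u) hφ huv.le
    (fun z hz => mul_le_mul_of_nonneg_left hz.1 hθ0) fun z hz => hnonneg z ⟨hz.1, hz.2.trans hvb.le⟩
  have hright := exp_mul_integral_le (E := θ * v) hφ hvb.le
    (fun z hz => mul_le_mul_of_nonneg_left hz.1 hθ0) fun z hz => hnonneg z ⟨huv.le.trans hz.1, hz.2⟩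
  have hmid0 : 0 ≤ ∫ z in u..v, φ z :=
    intervalIntegral.integral_nonneg huv.le fun z hz => hnonneg z ⟨hz.1, hz.2.trans hvb.le⟩
  have hexp : Real.exp (θ * v) = Real.exp (θ * u) * Real.exp (θ * (v - u)) := by
    rw [← Real.exp_add]
    ring_nf
  rw [hexp, mul_assoc] at hright
  rw [← integral_mul_exp_add hφ u, ← integral_mul_exp_add hφ v u b]
  linarith [mul_lt_mul_of_pos_left hθ (Real.exp_pos (θ * u)),
    mul_nonneg (Real.exp_pos (θ * u)).le hmid0]

lemma integral_mul_exp_le_of_le {t t' : ℝ} (hφ : Continuous φ) (hd : 0 ≤ d)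
    (hlow : ∀ z ≤ s, φ z = d) (htt' : t ≤ t') (ht' : t' ≤ s) (b θ : ℝ) :
    ∫ z in t'..b, φ z * Real.exp (θ * z) ≤ ∫ z in t..b, φ z * Real.exp (θ * z) := by
  rw [← integral_mul_exp_add hφ t' t b, le_add_iff_nonneg_left]
  refine intervalIntegral.integral_nonneg htt' fun z hz => ?_
  rw [hlow z (hz.2.trans ht')]
  exact mul_nonneg hd (Real.exp_pos _).le

lemma exists_integral_mul_exp_pos_of_nonpos (hφ : Continuous φ) (hd : 0 < d)
    (hlow : ∀ z ≤ s, φ z = d) (hsb : s ≤ b) :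
    ∃ t ≤ s, ∀ θ ≤ 0, 0 < ∫ z in t..b, φ z * Real.exp (θ * z) := by
  have habs : 0 ≤ ∫ z in s..b, |φ z| :=
    intervalIntegral.integral_nonneg hsb fun z _ => abs_nonneg (φ z)
  have hts : s - ((∫ z in s..b, |φ z|) / d + 1) ≤ s := sub_le_self _ (by positivity)
  refine ⟨s - ((∫ z in s..b, |φ z|) / d + 1), hts, fun θ hθ => ?_⟩
  have hleft := exp_mul_integral_le (E := θ * s) hφ hts
    (fun z hz => mul_le_mul_of_nonpos_left hz.2 hθ) fun z hz => (hlow z hz.2).ge.trans' hd.le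
  have hconst : ∫ z in s - ((∫ z in s..b, |φ z|) / d + 1)..s, φ z = (∫ z in s..b, |φ z|) + d := by
    rw [intervalIntegral.integral_congr (g := fun _ => d) fun z hz =>
      hlow z (Set.uIcc_of_le hts ▸ hz).2, intervalIntegral.integral_const, smul_eq_mul]
    field_simp
    ring
  have hright := neg_exp_mul_integral_abs_le (E := θ * s) hφ hsb fun z hz =>
    mul_le_mul_of_nonpos_left hz.1 hθ
  rw [hconst] at hleft
  rw [← integral_mul_exp_add hφ s]
  linarith [mul_pos (Real.exp_pos (θ * s)) hd]

lemma exists_forall_integral_mul_exp_pos (hφ : Continuous φ) (hd : 0 < d)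
    (hlow : ∀ z ≤ s, φ z = d) (hsb : s < b) (hright : ∀ᶠ z in 𝓝[<] b, 0 < φ z)
    (hpos : ∀ θ, 0 < θ → ∃ t ≤ s, 0 < ∫ z in t..b, φ z * Real.exp (θ * z)) :
    ∃ t ≤ s, ∀ θ, 0 < ∫ z in t..b, φ z * Real.exp (θ * z) := by
  obtain ⟨t₁, ht₁, H₁⟩ := exists_integral_mul_exp_pos_of_nonpos hφ hd hlow hsb.le
  obtain ⟨Θ, hΘ⟩ := eventually_atTop.1 (eventually_integral_mul_exp_pos hφ hsb hright)
  have hmono : ∀ {t t' : ℝ} (_ : t ≤ t') (_ : t' ≤ s) {θ : ℝ},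
      0 < ∫ z in t'..b, φ z * Real.exp (θ * z) → 0 < ∫ z in t..b, φ z * Real.exp (θ * z) :=
    fun htt' ht' _ hint => hint.trans_le (integral_mul_exp_le_of_le hφ hd.le hlow htt' ht' _ _)
  have : Nonempty (Set.Iic s) := ⟨⟨s, Set.self_mem_Iic⟩⟩
  obtain ⟨⟨t₂, ht₂⟩, H₂⟩ := (isCompact_Icc (a := (0 : ℝ)) (b := Θ)).elim_directed_cover
    (fun t : Set.Iic s => {θ : ℝ | 0 < ∫ z in (t : ℝ)..b, φ z * Real.exp (θ * z)})
    (fun t => isOpen_lt continuous_const (continuous_integral_mul_exp hφ _ _))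
    (fun θ hθ => by
      rcases hθ.1.eq_or_lt with rfl | hθ0
      · exact Set.mem_iUnion.2 ⟨⟨t₁, ht₁⟩, H₁ 0 le_rfl⟩
      · obtain ⟨t, ht, hint⟩ := hpos θ hθ0
        exact Set.mem_iUnion.2 ⟨⟨t, ht⟩, hint⟩)
    (Antitone.directed_le fun t t' htt' θ hint => hmono htt' t'.2 hint)
  refine ⟨min t₁ t₂, (min_le_left _ _).trans ht₁, fun θ => ?_⟩
  rcases le_total θ 0 with hθ0 | hθ0
  · exact hmono (min_le_left _ _) ht₁ (H₁ θ hθ0)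
  rcases le_total θ Θ with hθΘ | hθΘ
  · exact hmono (min_le_right _ _) ht₂ (H₂ ⟨hθ0, hθΘ⟩)
  · exact hmono ((min_le_left _ _).trans ht₁) le_rfl (hΘ θ hθΘ)

/-- A continuous cutoff, equal to `0` on `(-∞, t - 1]` and to `1` on `[t, ∞)`. -/
def cutoff (t z : ℝ) : ℝ := max 0 (min 1 (z - (t - 1)))

lemma continuous_cutoff (t : ℝ) : Continuous (cutoff t) := by
  unfold cutoff
  fun_prop

lemma cutoff_nonneg (t z : ℝ) : 0 ≤ cutoff t z := le_max_left _ _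

lemma cutoff_le_one (t z : ℝ) : cutoff t z ≤ 1 := max_le zero_le_one (min_le_left _ _)

lemma cutoff_pos {t z : ℝ} (hz : t - 1 < z) : 0 < cutoff t z :=
  lt_max_of_lt_right (lt_min one_pos (sub_pos.2 hz))

lemma cutoff_of_le {t z : ℝ} (hz : z ≤ t - 1) : cutoff t z = 0 :=
  max_eq_left ((min_le_right _ _).trans (sub_nonpos.2 hz))

lemma cutoff_of_ge {t z : ℝ} (hz : t ≤ z) : cutoff t z = 1 := by
  rw [cutoff, min_eq_left (by linarith), max_eq_right zero_le_one]

theorem hasNonnegTranslateSum_of_const_left (hφ : Continuous φ) (hd : 0 < d)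
    (hlow : ∀ z ≤ s, φ z = d) (hsb : s < b) (hhigh : ∀ z, b ≤ z → φ z = 0)
    (hright : ∀ᶠ z in 𝓝[<] b, 0 < φ z)
    (hpos : ∀ θ, 0 < θ → ∃ t ≤ s, 0 < ∫ z in t..b, φ z * Real.exp (θ * z)) :
    HasNonnegTranslateSum φ := by
  obtain ⟨t, hts, ht⟩ := exists_forall_integral_mul_exp_pos hφ hd hlow hsb hright hpos
  have hcont : Continuous fun z => φ z * cutoff t z := hφ.mul (continuous_cutoff t)
  have hlow' : ∀ z ≤ t, φ z = d := fun z hz => hlow z (hz.trans hts)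
  refine (hasNonnegTranslateSum_of_integral_pos (a := t - 1) (b := b) hcont (by linarith)
    (fun z hz => ?_) ?_ ?_ fun θ => ?_).mono fun z => ?_
  · exact ⟨not_le.1 fun hle => hz (by simp only [cutoff_of_le hle, mul_zero]),
      not_le.1 fun hle => hz (by simp only [hhigh z hle, zero_mul])⟩
  · filter_upwards [Ioo_mem_nhdsGT (sub_one_lt t)] with z hz
    rw [hlow' z hz.2.le]
    exact mul_pos hd (cutoff_pos hz.1)
  · filter_upwards [hright, Ioo_mem_nhdsLT (hts.trans_lt hsb)] with z hz htz
    rwa [cutoff_of_ge htz.1.le, mul_one]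
  · rw [← integral_mul_exp_add hcont t (t - 1) b]
    refine add_pos_of_nonneg_of_pos (intervalIntegral.integral_nonneg (sub_one_lt t).le
      fun z hz => ?_) ((ht θ).trans_eq (intervalIntegral.integral_congr fun z hz => ?_))
    · rw [hlow' z hz.2]
      exact mul_nonneg (mul_nonneg hd.le (cutoff_nonneg t z)) (Real.exp_pos _).le
    · rw [Set.uIcc_of_le (by linarith)] at hz
      simp only [cutoff_of_ge hz.1, mul_one]
  · rcases le_total z t with hz | hz
    · rw [hlow' z hz]
      exact mul_le_of_le_one_right hd.le (cutoff_le_one t z)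
    · rw [cutoff_of_ge hz, mul_one]

end Tail

/-! ### Sufficiency -/

section Sufficiency

variable {c : ℝ →₀ ℝ} {a b x₀ : ℝ}

lemma pairing_eq_of_forall_ne {g : ℝ → ℝ} (hg : ∀ x ∈ c.support, x ≠ x₀ → g x = 0) :
    pairing c g = c x₀ * g x₀ := by
  rw [pairing_eq_sum]
  refine Finset.sum_eq_single x₀ (fun x hx hne => ?_) fun hx => ?_
  · rw [hg x hx hne, mul_zero]
  · rw [Finsupp.notMem_support_iff.1 hx, zero_mul]

lemma eventually_hingeTransform_pos_nhdsLT (hb : ∀ x ∈ c.support, x ≤ b) (hcb : 0 < c b) :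
    ∀ᶠ y in 𝓝[<] b, 0 < hingeTransform c y := by
  have hgap : ∀ᶠ y in 𝓝[<] b, ∀ x ∈ c.support, x ≠ b → x < y :=
    (eventually_all_finset _).2 fun x hx => eventually_imp_distrib_left.2 fun hne =>
      eventually_nhdsWithin_of_eventually_nhds (lt_mem_nhds ((hb x hx).lt_of_ne hne))
  filter_upwards [hgap, self_mem_nhdsWithin] with y hy hyb
  rw [hingeTransform, pairing_eq_of_forall_ne (x₀ := b) fun x hx hne => max_eq_right
    (sub_nonpos.2 (Real.exp_le_one_iff.2 (sub_nonpos.2 (hy x hx hne).le)))]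
  exact mul_pos hcb (lt_max_of_lt_left (sub_pos.2 (Real.one_lt_exp_iff.2 (sub_pos.2 hyb))))

lemma hingeTransform_eq_pairing (hexp : pairing c Real.exp = 0)
    (hone : (pairing c fun _ => 1) = 0) (y : ℝ) :
    hingeTransform c y = pairing c fun x => max (1 - Real.exp (x - y)) 0 := by
  have hmax (x : ℝ) : max (Real.exp (x - y) - 1) 0 =
      max (1 - Real.exp (x - y)) 0 - (1 - Real.exp (-y) * Real.exp x) := by
    rw [← Real.exp_add, neg_add_eq_sub, ← max_sub_sub_right, sub_self, zero_sub, neg_sub, max_comm]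
  rw [hingeTransform, funext hmax, pairing_sub_right, pairing_sub_right, pairing_const_mul, hexp,
    hone, mul_zero, sub_zero, sub_zero]

lemma eventually_hingeTransform_pos_nhdsGT (hexp : pairing c Real.exp = 0)
    (hone : (pairing c fun _ => 1) = 0) (ha : ∀ x ∈ c.support, a ≤ x) (hca : 0 < c a) :
    ∀ᶠ y in 𝓝[>] a, 0 < hingeTransform c y := by
  have hgap : ∀ᶠ y in 𝓝[>] a, ∀ x ∈ c.support, x ≠ a → y < x :=
    (eventually_all_finset _).2 fun x hx => eventually_imp_distrib_left.2 fun hne =>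
      eventually_nhdsWithin_of_eventually_nhds (gt_mem_nhds ((ha x hx).lt_of_ne' hne))
  filter_upwards [hgap, self_mem_nhdsWithin] with y hy hay
  rw [hingeTransform_eq_pairing hexp hone, pairing_eq_of_forall_ne (x₀ := a) fun x hx hne =>
    max_eq_right (sub_nonpos.2 (Real.one_le_exp (sub_nonneg.2 (hy x hx hne).le)))]
  exact mul_pos hca (lt_max_of_lt_left (sub_pos.2 (Real.exp_lt_one_iff.2 (sub_neg.2 hay))))

lemma tendsto_pairing_exp {l : Filter ℝ}
    (hl : ∀ x ∈ c.support, x ≠ x₀ → Tendsto (fun θ => θ * (x - x₀)) l atBot) :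
    Tendsto (fun θ => pairing c fun x => Real.exp (θ * (x - x₀))) l (𝓝 (c x₀)) := by
  classical
  have hlim : c x₀ = ∑ x ∈ c.support, c x * if x = x₀ then 1 else 0 := by
    simp
  rw [hlim]
  refine tendsto_finsetSum _ fun x hx => Tendsto.const_mul _ ?_
  split_ifs with hxx₀
  · simp [hxx₀, tendsto_const_nhds]
  · exact Real.tendsto_exp_atBot.comp (hl x hx hxx₀)

lemma apply_pos_of_pairing_klimeshKernel_pos {l : Filter ℝ} [l.NeBot] (hx₀ : x₀ ∈ c.support)
    (hl : ∀ x ∈ c.support, x ≠ x₀ → Tendsto (fun θ => θ * (x - x₀)) l atBot)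
    (hθ : ∀ᶠ θ in l, 0 < θ * (θ - 1)) (hpos : ∀ᶠ θ in l, 0 < pairing c (klimeshKernel θ)) :
    0 < c x₀ := by
  refine lt_of_le_of_ne' (ge_of_tendsto (tendsto_pairing_exp hl) ?_) (Finsupp.mem_support_iff.1 hx₀)
  filter_upwards [hθ, hpos] with θ hθ hpos
  have hfactor (x : ℝ) : Real.exp (θ * (x - x₀)) =
      Real.exp (-(θ * x₀)) * (θ * (θ - 1)) * klimeshKernel θ x := by
    rw [klimeshKernel_of_ne (left_ne_zero_of_mul hθ.ne')
      (sub_ne_zero.1 (right_ne_zero_of_mul hθ.ne')), mul_assoc, mul_inv_cancel_left₀ hθ.ne',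
      ← Real.exp_add]
    ring_nf
  simp_rw [hfactor, pairing_const_mul]
  positivity

lemma exists_integral_hingeTransform_mul_exp_pos {θ : ℝ} (hexp : pairing c Real.exp = 0)
    (hc : ∀ x ∈ c.support, x ∈ Set.Icc a b) (hθ : 0 < θ) (hpos : 0 < pairing c (klimeshKernel θ)) :
    ∃ t ≤ a, 0 < ∫ z in t..b, hingeTransform c z * Real.exp (θ * z) := by
  have hprim : Tendsto (expPrimitive θ) atBot (𝓝 0) := by
    rw [funext (expPrimitive_of_ne_zero hθ.ne')]
    simpa using (Real.tendsto_exp_atBot.comp (tendsto_id.const_mul_atBot hθ)).div_const θ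
  have hlim : Tendsto (fun t => pairing c (klimeshKernel θ) + pairing c (fun _ => 1) *
      expPrimitive θ t) atBot (𝓝 (pairing c (klimeshKernel θ))) := by
    simpa using (hprim.const_mul (pairing c fun _ => 1)).const_add (pairing c (klimeshKernel θ))
  obtain ⟨t, htpos, hta⟩ := ((hlim.eventually_const_lt hpos).and (eventually_le_atBot a)).exists
  refine ⟨t, hta, ?_⟩
  rwa [integral_hingeTransform_mul_exp hexp fun x hx => ⟨hta.trans (hc x hx).1, (hc x hx).2⟩]

lemma exists_mem_support_subset_Icc {g : ℝ → ℝ} (hg : 0 < pairing c g) :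
    ∃ a b, a ∈ c.support ∧ b ∈ c.support ∧ ∀ x ∈ c.support, x ∈ Set.Icc a b := by
  have hne : c.support.Nonempty := (Finset.exists_ne_zero_of_sum_ne_zero hg.ne').imp fun _ h => h.1
  exact ⟨c.support.min' hne, c.support.max' hne, c.support.min'_mem hne, c.support.max'_mem hne,
    fun x hx => ⟨c.support.min'_le x hx, c.support.le_max' x hx⟩⟩

lemma apply_greatest_pos (hbc : b ∈ c.support) (hb : ∀ x ∈ c.support, x ≤ b)
    (hpos : ∀ θ, 0 < θ → 0 < pairing c (klimeshKernel θ)) : 0 < c b :=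
  apply_pos_of_pairing_klimeshKernel_pos (l := atTop) hbc
    (fun x hx hxb => tendsto_id.atTop_mul_const_of_neg (sub_neg.2 ((hb x hx).lt_of_ne hxb)))
    ((eventually_gt_atTop 1).mono fun _ hθ => mul_pos (one_pos.trans hθ) (sub_pos.2 hθ))
    ((eventually_gt_atTop 0).mono hpos)

lemma apply_least_pos (hac : a ∈ c.support) (ha : ∀ x ∈ c.support, a ≤ x)
    (hpos : ∀ θ < 0, 0 < pairing c (klimeshKernel θ)) : 0 < c a :=
  apply_pos_of_pairing_klimeshKernel_pos (l := atBot) hac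
    (fun x hx hxa => tendsto_id.atBot_mul_const (sub_pos.2 ((ha x hx).lt_of_ne' hxa)))
    ((eventually_lt_atBot 0).mono fun _ hθ => mul_pos_of_neg_of_neg hθ (by linarith))
    ((eventually_lt_atBot 0).mono hpos)

theorem hasNonnegTranslateSum_hingeTransform_of_pairing_one_neg (hexp : pairing c Real.exp = 0)
    (hone : (pairing c fun _ => 1) < 0) (hpos : ∀ θ, 0 < θ → 0 < pairing c (klimeshKernel θ)) :
    HasNonnegTranslateSum (hingeTransform c) := by
  obtain ⟨a, b, hac, hbc, hc⟩ := exists_mem_support_subset_Icc (hpos 1 one_pos)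
  have hcb := apply_greatest_pos hbc (fun x hx => (hc x hx).2) hpos
  have hc' : ∀ x ∈ c.support, x ∈ Set.Icc (a - 1) b := fun x hx =>
    ⟨(sub_one_lt a).le.trans (hc x hx).1, (hc x hx).2⟩
  exact hasNonnegTranslateSum_of_const_left (continuous_hingeTransform c) (neg_pos.2 hone)
    (fun z hz => hingeTransform_of_ge hexp (fun x hx => (hc' x hx).1) hz)
    ((sub_one_lt a).trans_le (hc a hac).2)
    (fun z hz => hingeTransform_of_le (fun x hx => (hc x hx).2) hz)
    (eventually_hingeTransform_pos_nhdsLT (fun x hx => (hc x hx).2) hcb)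
    fun θ hθ => exists_integral_hingeTransform_mul_exp_pos hexp hc' hθ (hpos θ hθ)

theorem hasNonnegTranslateSum_hingeTransform_of_pairing_one_eq_zero (hexp : pairing c Real.exp = 0)
    (hone : (pairing c fun _ => 1) = 0) (hpos : ∀ θ, 0 < pairing c (klimeshKernel θ)) :
    HasNonnegTranslateSum (hingeTransform c) := by
  obtain ⟨a, b, hac, hbc, hc⟩ := exists_mem_support_subset_Icc (hpos 1)
  have ha : ∀ x ∈ c.support, a ≤ x := fun x hx => (hc x hx).1
  have hb : ∀ x ∈ c.support, x ≤ b := fun x hx => (hc x hx).2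
  have hcb := apply_greatest_pos hbc hb fun θ _ => hpos θ
  have hca := apply_least_pos hac ha fun θ _ => hpos θ
  have hint (θ : ℝ) : 0 < ∫ z in a..b, hingeTransform c z * Real.exp (θ * z) := by
    rw [integral_hingeTransform_mul_exp hexp hc, hone, zero_mul, add_zero]
    exact hpos θ
  have hab : a < b := by
    refine (hc a hac).2.lt_of_ne ?_
    rintro rfl
    simpa using hint 0
  refine hasNonnegTranslateSum_of_integral_pos (continuous_hingeTransform c) hab (fun z hz => ?_)
    (eventually_hingeTransform_pos_nhdsGT hexp hone ha hca)
    (eventually_hingeTransform_pos_nhdsLT hb hcb) hint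
  exact ⟨not_le.1 fun hza => hz (by rw [hingeTransform_of_ge hexp ha hza, hone, neg_zero]),
    not_le.1 fun hbz => hz (hingeTransform_of_le hb hbz)⟩

end Sufficiency

/-! ### Klimesh's theorem -/

section Klimesh

lemma forall_pos_iff_split_at_one {P : ℝ → Prop} :
    (∀ θ, 0 < θ → P θ) ↔ (∀ θ, 0 < θ → θ < 1 → P θ) ∧ P 1 ∧ ∀ θ, 1 < θ → P θ := by
  refine ⟨fun h => ⟨fun θ h0 _ => h θ h0, h 1 one_pos, fun θ h1 => h θ (one_pos.trans h1)⟩, ?_⟩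
  rintro ⟨hmid, hone, hbig⟩ θ hθ
  rcases lt_trichotomy θ 1 with h1 | rfl | h1
  exacts [hmid θ hθ h1, hone, hbig θ h1]

lemma forall_nonpos_iff_split_at_zero {P : ℝ → Prop} :
    (∀ θ ≤ 0, P θ) ↔ P 0 ∧ ∀ θ < 0, P θ := by
  simp only [le_iff_lt_or_eq, or_imp, forall_and, forall_eq, and_comm]

variable {ι κ : Type*} [Fintype ι] [Fintype κ] {p : ι → ℝ} {q : κ → ℝ} {θ : ℝ}

lemma pairing_klimeshKernel_pos_iff_of_mul_neg (hp : ∀ i, 0 ≤ p i) (hq : ∀ j, 0 ≤ q j)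
    (hθ : θ * (θ - 1) < 0) :
    0 < pairing (logSpectrum p - logSpectrum q) (klimeshKernel θ) ↔ fA θ p < fA θ q := by
  rw [pairing_klimeshKernel_of_ne hp hq (left_ne_zero_of_mul hθ.ne)
    (sub_ne_zero.1 (right_ne_zero_of_mul hθ.ne)), ← neg_mul_neg,
    mul_pos_iff_of_pos_left (neg_pos.2 (inv_lt_zero.2 hθ)), neg_pos, sub_neg]

lemma pairing_klimeshKernel_nonneg_iff_of_mul_neg (hp : ∀ i, 0 ≤ p i) (hq : ∀ j, 0 ≤ q j)
    (hθ : θ * (θ - 1) < 0) :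
    0 ≤ pairing (logSpectrum p - logSpectrum q) (klimeshKernel θ) ↔ fA θ p ≤ fA θ q := by
  rw [pairing_klimeshKernel_of_ne hp hq (left_ne_zero_of_mul hθ.ne)
    (sub_ne_zero.1 (right_ne_zero_of_mul hθ.ne)), ← neg_mul_neg,
    mul_nonneg_iff_of_pos_left (neg_pos.2 (inv_lt_zero.2 hθ)), neg_nonneg, sub_nonpos]

lemma pairing_klimeshKernel_pos_iff_of_mul_pos (hp : ∀ i, 0 ≤ p i) (hq : ∀ j, 0 ≤ q j)
    (hθ : 0 < θ * (θ - 1)) :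
    0 < pairing (logSpectrum p - logSpectrum q) (klimeshKernel θ) ↔ fA θ q < fA θ p := by
  rw [pairing_klimeshKernel_of_ne hp hq (left_ne_zero_of_mul hθ.ne')
    (sub_ne_zero.1 (right_ne_zero_of_mul hθ.ne')), mul_pos_iff_of_pos_left (inv_pos.2 hθ), sub_pos]

lemma pairing_klimeshKernel_nonneg_iff_of_mul_pos (hp : ∀ i, 0 ≤ p i) (hq : ∀ j, 0 ≤ q j)
    (hθ : 0 < θ * (θ - 1)) :
    0 ≤ pairing (logSpectrum p - logSpectrum q) (klimeshKernel θ) ↔ fA θ q ≤ fA θ p := by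
  rw [pairing_klimeshKernel_of_ne hp hq (left_ne_zero_of_mul hθ.ne')
    (sub_ne_zero.1 (right_ne_zero_of_mul hθ.ne')), mul_nonneg_iff_of_pos_left (inv_pos.2 hθ),
    sub_nonneg]

lemma pairing_klimeshKernel_pos_of_pos_iff (hp : ∀ i, 0 ≤ p i) (hq : ∀ j, 0 ≤ q j)
    (hpq : ∑ i, p i = ∑ j, q j) :
    (∀ θ, 0 < θ → 0 < pairing (logSpectrum p - logSpectrum q) (klimeshKernel θ)) ↔
      (∀ α, 0 < α → α < 1 → fA α p < fA α q) ∧ H1ent p < H1ent q ∧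
        ∀ α, 1 < α → fA α q < fA α p := by
  rw [forall_pos_iff_split_at_one, pairing_klimeshKernel_one hp hq hpq, sub_pos]
  refine and_congr (forall₃_congr fun θ h0 h1 => ?_)
    (and_congr_right' (forall₂_congr fun θ h1 => ?_))
  · exact pairing_klimeshKernel_pos_iff_of_mul_neg hp hq (mul_neg_of_pos_of_neg h0 (sub_neg.2 h1))
  · exact pairing_klimeshKernel_pos_iff_of_mul_pos hp hq
      (mul_pos (one_pos.trans h1) (sub_pos.2 h1))

lemma pairing_klimeshKernel_nonneg_of_pos_iff (hp : ∀ i, 0 ≤ p i) (hq : ∀ j, 0 ≤ q j)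
    (hpq : ∑ i, p i = ∑ j, q j) :
    (∀ θ, 0 < θ → 0 ≤ pairing (logSpectrum p - logSpectrum q) (klimeshKernel θ)) ↔
      (∀ α, 0 < α → α < 1 → fA α p ≤ fA α q) ∧ H1ent p ≤ H1ent q ∧
        ∀ α, 1 < α → fA α q ≤ fA α p := by
  rw [forall_pos_iff_split_at_one, pairing_klimeshKernel_one hp hq hpq, sub_nonneg]
  refine and_congr (forall₃_congr fun θ h0 h1 => ?_)
    (and_congr_right' (forall₂_congr fun θ h1 => ?_))
  · exact pairing_klimeshKernel_nonneg_iff_of_mul_neg hp hq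
      (mul_neg_of_pos_of_neg h0 (sub_neg.2 h1))
  · exact pairing_klimeshKernel_nonneg_iff_of_mul_pos hp hq
      (mul_pos (one_pos.trans h1) (sub_pos.2 h1))

lemma pairing_klimeshKernel_pos_of_nonpos_iff (hp : ∀ i, 0 ≤ p i) (hq : ∀ j, 0 ≤ q j)
    (hsupp : supp0 p = supp0 q) :
    (∀ θ ≤ 0, 0 < pairing (logSpectrum p - logSpectrum q) (klimeshKernel θ)) ↔
      H0' p < H0' q ∧ ∀ α, α < 0 → fA α q < fA α p := by
  rw [forall_nonpos_iff_split_at_zero, pairing_klimeshKernel_zero p q hsupp, sub_pos]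
  exact and_congr_right' (forall₂_congr fun θ hθ => pairing_klimeshKernel_pos_iff_of_mul_pos hp hq
    (mul_pos_of_neg_of_neg hθ (sub_neg.2 (hθ.trans one_pos))))

lemma pairing_klimeshKernel_nonneg_of_nonpos_iff (hp : ∀ i, 0 ≤ p i) (hq : ∀ j, 0 ≤ q j)
    (hsupp : supp0 p = supp0 q) :
    (∀ θ ≤ 0, 0 ≤ pairing (logSpectrum p - logSpectrum q) (klimeshKernel θ)) ↔
      H0' p ≤ H0' q ∧ ∀ α, α < 0 → fA α q ≤ fA α p := by
  rw [forall_nonpos_iff_split_at_zero, pairing_klimeshKernel_zero p q hsupp, sub_nonneg]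
  exact and_congr_right' (forall₂_congr fun θ hθ =>
    pairing_klimeshKernel_nonneg_iff_of_mul_pos hp hq
      (mul_pos_of_neg_of_neg hθ (sub_neg.2 (hθ.trans one_pos))))

lemma pairing_sub_logSpectrum_exp (hp : ∀ i, 0 ≤ p i) (hq : ∀ j, 0 ≤ q j)
    (hpq : ∑ i, p i = ∑ j, q j) : pairing (logSpectrum p - logSpectrum q) Real.exp = 0 := by
  rw [pairing_sub_left, pairing_logSpectrum_exp hp, pairing_logSpectrum_exp hq, hpq, sub_self]

lemma pairing_sub_logSpectrum_one (p : ι → ℝ) (q : κ → ℝ) :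
    pairing (logSpectrum p - logSpectrum q) (fun _ => 1) = (supp0 p : ℝ) - supp0 q := by
  rw [pairing_sub_left, pairing_logSpectrum_one, pairing_logSpectrum_one]

theorem klimesh_reformulated_general
    {ι κ : Type*} [Fintype ι] [Fintype κ] (p : ι → ℝ) (q : κ → ℝ)
    (hp : ∀ i, 0 ≤ p i) (hq : ∀ j, 0 ≤ q j) (hpq : ∑ i, p i = ∑ j, q j) :
    (((∀ α : ℝ, 0 < α → α < 1 → fA α p < fA α q) ∧
      H1ent p < H1ent q ∧
      (∀ α : ℝ, 1 < α → fA α q < fA α p) ∧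
      (supp0 p < supp0 q ∨
        (supp0 p = supp0 q ∧ H0' p < H0' q ∧
          ∀ α : ℝ, α < 0 → fA α q < fA α p))) →
      ∃ (ρ : ℕ) (r : Fin ρ → ℝ), IsProbVec r ∧
        Majorizes (kron p r) (kron q r)) ∧
    ((∃ (ρ : ℕ) (r : Fin ρ → ℝ), IsProbVec r ∧
        Majorizes (kron p r) (kron q r)) →
      (∀ α : ℝ, 0 < α → α < 1 → fA α p ≤ fA α q) ∧
      H1ent p ≤ H1ent q ∧
      (∀ α : ℝ, 1 < α → fA α q ≤ fA α p) ∧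
      supp0 p ≤ supp0 q ∧
      (supp0 p = supp0 q → H0' p ≤ H0' q ∧
        ∀ α : ℝ, α < 0 → fA α q ≤ fA α p)) := by
  have hexp := pairing_sub_logSpectrum_exp hp hq hpq
  have hone := pairing_sub_logSpectrum_one p q
  rw [exists_catalyst_iff hp hq hpq]
  constructor
  · rintro ⟨hmid, hH1, hbig, hsupp⟩
    have hpos := (pairing_klimeshKernel_pos_of_pos_iff hp hq hpq).2 ⟨hmid, hH1, hbig⟩
    rcases hsupp with hsupp | ⟨hsupp, hneg⟩
    · exact hasNonnegTranslateSum_hingeTransform_of_pairing_one_neg hexp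
        (hone.trans_lt (sub_neg.2 (Nat.cast_lt.2 hsupp))) hpos
    · exact hasNonnegTranslateSum_hingeTransform_of_pairing_one_eq_zero hexp
        (by rw [hone, hsupp, sub_self]) fun θ => (le_or_gt θ 0).elim
          ((pairing_klimeshKernel_pos_of_nonpos_iff hp hq hsupp).2 hneg θ) (hpos θ)
  · intro h
    have hone_nonpos := h.pairing_one_nonpos hexp
    obtain ⟨hmid, hH1, hbig⟩ := (pairing_klimeshKernel_nonneg_of_pos_iff hp hq hpq).1 fun θ hθ =>
      h.pairing_klimeshKernel_nonneg hexp fun t =>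
        mul_nonpos_of_nonpos_of_nonneg hone_nonpos (expPrimitive_nonneg hθ t)
    refine ⟨hmid, hH1, hbig, Nat.cast_le.1 (sub_nonpos.1 (hone ▸ hone_nonpos)), fun hsupp =>
      (pairing_klimeshKernel_nonneg_of_nonpos_iff hp hq hsupp).1 fun θ _ =>
        h.pairing_klimeshKernel_nonneg hexp fun t => ?_⟩
    rw [hone, hsupp, sub_self, zero_mul]

end Klimesh

/-- **Klimesh's theorem, reformulated.**  Strict inequalities between the
monotones `f_α`, the Shannon entropy `H₁`, the support size `‖·‖₀` and `H₀'`
imply exact catalytic majorization, and conversely catalytic majorization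
implies the non-strict inequalities. -/
theorem klimesh_reformulated
    {m m' : ℕ} (p : Fin m → ℝ) (q : Fin m' → ℝ)
    (hp : IsProbVec p) (hq : IsProbVec q) :
    (((∀ α : ℝ, 0 < α → α < 1 → fA α p < fA α q) ∧
      H1ent p < H1ent q ∧
      (∀ α : ℝ, 1 < α → fA α q < fA α p) ∧
      (supp0 p < supp0 q ∨
        (supp0 p = supp0 q ∧ H0' p < H0' q ∧
          ∀ α : ℝ, α < 0 → fA α q < fA α p))) →
      ∃ (ρ : ℕ) (r : Fin ρ → ℝ), IsProbVec r ∧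
        Majorizes (kron p r) (kron q r)) ∧
    ((∃ (ρ : ℕ) (r : Fin ρ → ℝ), IsProbVec r ∧
        Majorizes (kron p r) (kron q r)) →
      (∀ α : ℝ, 0 < α → α < 1 → fA α p ≤ fA α q) ∧
      H1ent p ≤ H1ent q ∧
      (∀ α : ℝ, 1 < α → fA α q ≤ fA α p) ∧
      supp0 p ≤ supp0 q ∧
      (supp0 p = supp0 q → H0' p ≤ H0' q ∧
        ∀ α : ℝ, α < 0 → fA α q ≤ fA α p)) := by
  exact klimesh_reformulated_general p q hp.1 hq.1 (hp.2.trans hq.2.symm)
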